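/- arXiv:1912.10365 — 3 statements merged into one kernel-verified Lean document; each statement's English description precedes it below -/
import Mathlib

section
/- Let q = p^f be a power of a prime p, let r ≥ 1 and let s_1,…,s_r be negative integers. Then the multiple zeta value ζ(s_1,…,s_r) = Σ_{d_1 > … > d_r ≥ 0} S_{d_1}(s_1)···S_{d_r}(s_r) equals 0 if and only if either (1) r > 1 and there exists 1 ≤ i ≤ r−1 with r−i > L_{−s_i}, or (2) r = 1 and (q−1) | s_1. -/
/-!
Write `q = p ^ f` and `k = -s`.

**Power sums and chains.** Splitting a monic polynomial of degree `d + 1` as `X * b + a` with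
`a : F`, expanding `(X * b + a) ^ k` and using that `∑ a, a ^ m` is `-1` or `0` gives a recursion for
`S_d(-k)`. By Lucas' theorem its iterates are indexed by chains `k > j_1 > ⋯ > j_d` in which every
term is digitwise dominated in base `p` by the preceding one and congruent to it modulo `q - 1`; such
a chain contributes a nonzero multiple of `X ^ (j_1 + ⋯ + j_d)`. `Tp d k` collects the chains with
positive terms, and `S_{d+1}(-k) = Tp (d+1) k - [q - 1 ∣ k] Tp d k` (`powerSum_eq_Tp`). In depth one,
when `q - 1 ∣ k`, the sum over `d` telescopes to `0`; otherwise its value at `X = 0` is `1`.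

**Vanishing.** The weighted digit sums `Av k c` (`c : ZMod f`) are the base-`q` digit sums of the
numbers `k * p ^ i` (`digits_sum_eq_Av`), so `L_k` is their minimum divided by `q - 1`. Each step of
a chain lowers every `Av` by at least `q - 1`, so a chain of length `d` with positive terms exists
only if all `Av k c` exceed `d (q - 1)` (`TCh.length_lt`). Since a strictly decreasing
`d_1 > ⋯ > d_r ≥ 0` has `d_i ≥ r - i`, condition (1) kills every term of the multiple sum.

**Nonvanishing.** If all `Av k c` exceed `d (q - 1)`, there is a unique chain of length `d` of least
sum (`exists_min_chain`). Hence `S_d(-k)` has a known exact `X`-order, and all later power sums have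
a strictly larger one (`powerSum_lowOrd`). If (1) fails and `r > 1`, then `(r - 1, …, 1, 0)` is the
only index of minimal `X`-order in the multiple sum, which is therefore nonzero (`finsum_ne_zero`).

**The least chain.** A number dominated by `k` is relaxed to its vector `A = (Av _ c)_c`. The number
of base-`p` digits at positions `≡ c` mod `f`, counted with their values, is
`(p A_{c+1} - A_c) / (q - 1)`, and the weight `W A` is the least value of a collection of base-`p`
digits (called items) of `k` with these counts. The weight is injective and submodular, and satisfies a
convexity inequality; an exchange argument (`IsMin.exchange`) then shows that the greedy relaxed
chain, which takes the weight minimizer at each step, is the unique one of least total weight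
(`Sys.greedy`). Its counts are nested (`IsMin.nested`), so it is realized by a genuine chain of
numbers (`TCh_of_nested`).
-/

open Polynomial

open scoped Classical

/-- The monic polynomial `X^d + c_{d-1} X^{d-1} + ... + c_0` determined by its lower
coefficients `c : Fin d → F`; these parametrize the monic polynomials of degree `d`. -/
noncomputable def monicPoly (F : Type) [Field F] (d : ℕ) (c : Fin d → F) : F[X] :=
  X ^ d + ∑ i : Fin d, C (c i) * X ^ (i : ℕ)

/-- `S_d(-k) = Σ_{a monic of degree d} a^k`. -/
noncomputable def powerSum (F : Type) [Field F] [Fintype F] (d k : ℕ) : F[X] :=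
  ∑ c : Fin d → F, monicPoly F d c ^ k

/-- `S̃_d(-k) = Σ_{a monic of degree d, v ∤ a} a^k`. -/
noncomputable def rPowerSum (F : Type) [Field F] [Fintype F] (v : F[X]) (d k : ℕ) : F[X] :=
  ∑ c : Fin d → F, if v ∣ monicPoly F d c then 0 else monicPoly F d c ^ k

/-- `∑ i, m i = k` with no carrying of base-`p` digits. -/
def NoCarry (p : ℕ) {n : ℕ} (m : Fin n → ℕ) (k : ℕ) : Prop :=
  (∑ i, m i = k) ∧
    ∀ j : ℕ, (∑ i, (Nat.digits p (m i)).getD j 0) = (Nat.digits p k).getD j 0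

/-- `U_d(k)`. -/
def Uset (p q d k : ℕ) : Set (Fin (d + 1) → ℕ) :=
  {m | NoCarry p m k ∧ ∀ i : Fin (d + 1), 0 < (i : ℕ) → 0 < m i ∧ (q - 1) ∣ m i}

/-- `V_d(k)`. -/
def Vset (p q d k : ℕ) : Set (Fin (d + 1) → ℕ) :=
  {m | m ∈ Uset p q d k ∧ 0 < m 0}

/-- `W_d(k)`, the index set for the restricted power sum at `v = t`. -/
def Wset (p q d k : ℕ) : Set (Fin (d + 1) → ℕ) :=
  {m | NoCarry p m k ∧
      (∀ i : Fin (d + 1), 0 < (i : ℕ) → (i : ℕ) < d → 0 < m i ∧ (q - 1) ∣ m i) ∧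
      (q - 1) ∣ m (Fin.last d)}

/-- the weight `d·m_0 + (d-1)·m_1 + ⋯ + 1·m_{d-1}`. -/
def wt {d : ℕ} (m : Fin (d + 1) → ℕ) : ℕ := ∑ i : Fin (d + 1), (d - (i : ℕ)) * m i

/-- `L_k = min_{0 ≤ i ≤ f-1} l(k·p^i)/(q-1)` where `l` is the base-`q` digit sum. -/
noncomputable def Lval (q p f k : ℕ) : ℚ :=
  (Finset.Icc 0 (f - 1)).inf' ⟨0, by simp⟩
    (fun i => ((Nat.digits q (k * p ^ i)).sum : ℚ) / ((q : ℚ) - 1))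

/-- the `v`-adic multiple zeta value at negative integers `s_1, …, s_r`. -/
noncomputable def zetaV (F : Type) [Field F] [Fintype F] (v : F[X]) {r : ℕ}
    (s : Fin r → ℤ) : F[X] :=
  ∑ᶠ d ∈ {d : Fin r → ℕ | StrictAnti d}, ∏ i, rPowerSum F v (d i) (-(s i)).toNat

/-- the multiple zeta value at negative integers `s_1, …, s_r`. -/
noncomputable def zetaMZV (F : Type) [Field F] [Fintype F] {r : ℕ} (s : Fin r → ℤ) : F[X] :=
  ∑ᶠ d ∈ {d : Fin r → ℕ | StrictAnti d}, ∏ i, powerSum F (d i) (-(s i)).toNat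

/-- the trivial-zero condition for a prime of degree `e`. -/
def TrivialZeroCond (q p f : ℕ) {r : ℕ} (s : Fin r → ℤ) (e : ℕ) : Prop :=
  (∃ i : Fin r, s i < 0 ∧
      Lval q p f (-(s i)).toNat + (e : ℚ) < ((r - 1 - (i : ℕ) : ℕ) : ℚ)) ∨
  (∃ i j : Fin r, j < i ∧ s i < 0 ∧ s j < 0 ∧
      (r - 1 - (i : ℕ) : ℕ) < e ∧
      Lval q p f (-(s i)).toNat < ((r - 1 - (i : ℕ) : ℕ) : ℚ) ∧
      Lval q p f (-(s j)).toNat < (((i : ℕ) - (j : ℕ) : ℕ) : ℚ))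

/-! ### Item lists and base-`p` digit comparison -/

namespace MZVal

open Finset

set_option linter.unusedSectionVars false

/-- Item lists: for every residue class `c` modulo `f`, a nondecreasing sequence of positions
`e c 0 ≤ e c 1 ≤ ⋯`, all congruent to `c`, with at most `p - 1` items at each position
(this is what `gap` encodes). The item `i` of type `c` has value `p ^ e c i`. -/
structure Items (p f : ℕ) where
  e : ZMod f → ℕ → ℕ
  mono : ∀ c, Monotone (e c)
  typ : ∀ c i, ((e c i : ℕ) : ZMod f) = c
  gap : ∀ c i, e c i + f ≤ e c (i + (p - 1))

variable {p f : ℕ} [NeZero f]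

/-- The total value of the `m` smallest items of type `c`. -/
def Items.phi (E : Items p f) (c : ZMod f) (m : ℕ) : ℕ := ∑ i ∈ range m, p ^ E.e c i

/-- The total value of the collection containing the `n c` smallest items of each type `c`. -/
def Items.Phi (E : Items p f) (n : ZMod f → ℕ) : ℕ := ∑ c, E.phi c (n c)

/-- The number of items at position `j` in the collection with `n c` smallest items of type `c`. -/
def Items.cnt (E : Items p f) (n : ZMod f → ℕ) (j : ℕ) : ℕ :=
  ((range (n (j : ZMod f))).filter (fun i => E.e (j : ZMod f) i = j)).card

lemma digit_sum_lt {p : ℕ} (hp : 2 ≤ p) (a : ℕ → ℕ) (B : ℕ) (ha : ∀ j < B, a j ≤ p - 1) :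
    ∑ j ∈ range B, a j * p ^ j < p ^ B := by
  induction B with
  | zero => simp
  | succ B ih =>
    rw [sum_range_succ, pow_succ]
    have h1 := ih (fun j hj => ha j (by omega))
    have h2 : a B * p ^ B ≤ (p - 1) * p ^ B := Nat.mul_le_mul_right _ (ha B (by omega))
    obtain ⟨r, rfl⟩ : ∃ r, p = r + 2 := ⟨p - 2, by omega⟩
    have : r + 2 - 1 = r + 1 := by omega
    rw [this] at h2
    nlinarith

lemma digit_compare {p : ℕ} (hp : 2 ≤ p) (a b : ℕ → ℕ) (B : ℕ) (ha : ∀ j < B, a j ≤ p - 1)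
    (hb : ∀ j < B, b j ≤ p - 1)
    (h : ∑ j ∈ range B, a j * p ^ j < ∑ j ∈ range B, b j * p ^ j) :
    ∃ N < B, a N < b N ∧ ∀ j, N < j → j < B → a j = b j := by
  induction B with
  | zero => simp at h
  | succ B ih =>
    rw [sum_range_succ, sum_range_succ] at h
    have h2 := digit_sum_lt hp b B (fun j hj => hb j (by omega))
    rcases lt_trichotomy (a B) (b B) with hlt | heq | hgt
    · exact ⟨B, by omega, hlt, fun j h1 h2 => by omega⟩
    · rw [heq] at h
      obtain ⟨N, hN, h3, h4⟩ := ih (fun j hj => ha j (by omega)) (fun j hj => hb j (by omega))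
        (by omega)
      refine ⟨N, by omega, h3, fun j h5 h6 => ?_⟩
      rcases Nat.lt_succ_iff_lt_or_eq.mp h6 with h7 | h7
      · exact h4 j h5 h7
      · rw [h7, heq]
    · exfalso
      have : (b B + 1) * p ^ B ≤ a B * p ^ B := Nat.mul_le_mul_right _ hgt
      rw [add_mul, one_mul] at this
      omega

/-- A number whose base-`p` digits live below position `N` and vanish at all positions congruent
to `N` modulo `f` stays below `p ^ N` by a definite proportion. -/
lemma digit_sum_avoid {p f : ℕ} (hp : 2 ≤ p) (hf : 0 < f) (N : ℕ) (a : ℕ → ℕ)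
    (ha : ∀ j < N, a j ≤ p - 1) (h0 : ∀ j < N, j ≡ N [MOD f] → a j = 0) :
    (p ^ f - 1) * ∑ j ∈ range N, a j * p ^ j + (p - 1) * p ^ N ≤ (p ^ f - 1) * p ^ N := by
  obtain ⟨r, rfl⟩ : ∃ r, p = r + 2 := ⟨p - 2, by omega⟩
  have e1 : r + 2 - 1 = r + 1 := by omega
  simp only [e1] at ha ⊢
  induction N using Nat.strong_induction_on with
  | _ N ih =>
    obtain ⟨Q, hQ⟩ : ∃ Q, (r + 2) ^ f = Q + 1 :=
      ⟨(r + 2) ^ f - 1, by have := Nat.one_le_pow f (r + 2) (by omega); omega⟩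
    rw [hQ, Nat.add_sub_cancel]
    rcases lt_or_ge N f with hNf | hNf
    · have h1 := digit_sum_lt hp a N (by simpa [e1] using ha)
      have h2 : (r + 2) ^ (N + 1) ≤ (r + 2) ^ f := Nat.pow_le_pow_right (by omega) hNf
      rw [hQ, pow_succ] at h2
      set S := ∑ j ∈ range N, a j * (r + 2) ^ j
      have h3 : Q * S + Q ≤ Q * (r + 2) ^ N := by nlinarith
      have h4 : 0 < (r + 2) ^ N := by positivity
      nlinarith
    · obtain ⟨M, rfl⟩ : ∃ M, N = M + f := ⟨N - f, by omega⟩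
      have h1 := ih M (by omega) (fun j hj hjM => h0 j (by omega) (by
        simpa [Nat.ModEq] using hjM)) (fun j hj => ha j (by omega))
      rw [hQ, Nat.add_sub_cancel] at h1
      have haM : a M = 0 := h0 M (by omega) (by simp [Nat.ModEq])
      -- the block of positions `M, …, M + f - 1`, with nothing at `M`
      have h2 : ∀ g, g + 1 ≤ f → ∑ j ∈ range (M + (g + 1)), a j * (r + 2) ^ j + (r + 2) ^ (M + 1) ≤
          ∑ j ∈ range M, a j * (r + 2) ^ j + (r + 2) ^ (M + (g + 1)) := by
        intro g
        induction g with
        | zero => intro _; simp [sum_range_succ, haM]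
        | succ g ihg =>
          intro hg
          have h3 := ihg (by omega)
          have hpow : (r + 2) ^ (M + (g + 1) + 1) = (r + 2) ^ (M + (g + 1)) * (r + 2) :=
            pow_succ _ _
          rw [← Nat.add_assoc M (g + 1) 1, sum_range_succ, hpow]
          have h4 : a (M + (g + 1)) * (r + 2) ^ (M + (g + 1)) ≤
            (r + 1) * (r + 2) ^ (M + (g + 1)) := Nat.mul_le_mul_right _ (ha _ (by omega))
          nlinarith
      have h3 := h2 (f - 1) (by omega)
      rw [Nat.sub_add_cancel hf] at h3
      have h4 : (r + 2) ^ (M + f) = (Q + 1) * (r + 2) ^ M := by rw [pow_add, hQ, mul_comm]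
      have h5 : (r + 2) ^ (M + 1) = (r + 2) * (r + 2) ^ M := by rw [pow_succ, mul_comm]
      rw [h4, h5] at h3
      rw [h4]
      have h6 := Nat.mul_le_mul_left Q h3
      nlinarith

namespace Items

variable (E : Items p f)

lemma phi_mono (c : ZMod f) {m m' : ℕ} (h : m ≤ m') : E.phi c m ≤ E.phi c m' :=
  sum_le_sum_of_subset (range_mono h)

lemma phi_succ (c : ZMod f) (m : ℕ) : E.phi c (m + 1) = E.phi c m + p ^ E.e c m :=
  sum_range_succ _ _

lemma Phi_mono {n n' : ZMod f → ℕ} (h : ∀ c, n c ≤ n' c) : E.Phi n ≤ E.Phi n' :=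
  sum_le_sum fun c _ => E.phi_mono c (h c)

/-- Convexity of `phi`, in increment form. -/
lemma phi_add_le (hp : 2 ≤ p) (c : ZMod f) {a b : ℕ} (h : a ≤ b) (t : ℕ) :
    E.phi c (a + t) + E.phi c b ≤ E.phi c (b + t) + E.phi c a := by
  induction t with
  | zero => simp [add_comm]
  | succ t ih =>
    rw [← add_assoc, ← add_assoc, phi_succ, phi_succ]
    have : p ^ E.e c (a + t) ≤ p ^ E.e c (b + t) :=
      Nat.pow_le_pow_right (by omega) (E.mono c (by omega))
    omega

/-- Dropping `p - 1` items divides the value of the collection by at least `q = p ^ f`. -/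
lemma phi_shift (hp : 2 ≤ p) (c : ZMod f) (m : ℕ) :
    p ^ f * E.phi c (m - (p - 1)) ≤ E.phi c m := by
  rcases le_total m (p - 1) with h | h
  · simp [Nat.sub_eq_zero_of_le h, phi]
  · obtain ⟨t, rfl⟩ : ∃ t, m = t + (p - 1) := ⟨m - (p - 1), by omega⟩
    rw [Nat.add_sub_cancel]
    clear h
    induction t with
    | zero => simp [phi]
    | succ t ih =>
      have h1 : t + 1 + (p - 1) = t + (p - 1) + 1 := by omega
      rw [h1, phi_succ, phi_succ, mul_add, ← pow_add]
      have : p ^ (f + E.e c t) ≤ p ^ E.e c (t + (p - 1)) :=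
        Nat.pow_le_pow_right (by omega) (by have := E.gap c t; omega)
      omega

lemma cnt_le (n : ZMod f → ℕ) (j : ℕ) : E.cnt n j ≤ p - 1 := by
  unfold cnt
  set s := (range (n (j : ZMod f))).filter (fun i => E.e (j : ZMod f) i = j) with hs
  rcases s.eq_empty_or_nonempty with h | h
  · simp [h]
  · have hmin := s.min'_mem h
    have : s ⊆ Ico (s.min' h) (s.min' h + (p - 1)) := by
      intro i hi
      rw [mem_Ico]
      refine ⟨s.min'_le i hi, ?_⟩
      by_contra hcon
      push Not at hcon
      have h1 := E.gap (j : ZMod f) (s.min' h)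
      have h2 := E.mono (j : ZMod f) hcon
      have h3 := (mem_filter.mp hmin).2
      have h4 := (mem_filter.mp hi).2
      have := NeZero.pos f
      omega
    have := card_le_card this
    simpa using this

lemma cnt_mono {n n' : ZMod f → ℕ} {j : ℕ} (h : n j ≤ n' j) : E.cnt n j ≤ E.cnt n' j :=
  card_le_card (filter_subset_filter _ (range_mono h))

lemma Phi_eq_sum_cnt (n : ZMod f → ℕ) (B : ℕ) (hB : ∀ c, ∀ i < n c, E.e c i < B) :
    E.Phi n = ∑ j ∈ range B, E.cnt n j * p ^ j := by
  have h1 : ∀ c, E.phi c (n c) =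
      ∑ j ∈ range B, ((range (n c)).filter (fun i => E.e c i = j)).card * p ^ j := by
    intro c
    unfold phi
    rw [← sum_fiberwise_of_maps_to (s := range (n c)) (t := range B) (g := E.e c)
      (fun i hi => mem_range.mpr (hB c i (mem_range.mp hi)))]
    refine sum_congr rfl fun j _ => ?_
    rw [sum_congr rfl (g := fun _ => p ^ j) (fun i hi => by rw [(mem_filter.mp hi).2])]
    simp
  unfold Phi
  rw [sum_congr rfl fun c _ => h1 c, sum_comm]
  refine sum_congr rfl fun j _ => ?_
  rw [sum_eq_single (j : ZMod f)]
  · rfl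
  · intro c _ hc
    rw [filter_false_of_mem, card_empty, zero_mul]
    intro i _ hi
    apply hc
    rw [← E.typ c i, hi]
  · simp

lemma Phi_lt (hp : 2 ≤ p) (n : ZMod f → ℕ) (B : ℕ) (hB : ∀ c, ∀ i < n c, E.e c i < B) :
    E.Phi n < p ^ B := by
  rw [E.Phi_eq_sum_cnt n B hB]
  exact digit_sum_lt hp _ _ (fun j _ => E.cnt_le n j)

lemma exists_bound (n : ZMod f → ℕ) : ∃ B, ∀ c, ∀ i < n c, E.e c i < B := by
  refine ⟨(∑ c, E.e c (n c)) + 1, fun c i hi => ?_⟩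
  have h1 := E.mono c hi.le
  have h2 : E.e c (n c) ≤ ∑ c, E.e c (n c) :=
    single_le_sum (f := fun c => E.e c (n c)) (fun _ _ => Nat.zero_le _) (mem_univ c)
  omega

lemma le_e (c : ZMod f) (m : ℕ) : m ≤ E.e c (m * (p - 1)) := by
  induction m with
  | zero => simp
  | succ m ih =>
    have h1 := E.gap c (m * (p - 1))
    have h2 := NeZero.pos f
    rw [add_mul, one_mul]
    omega

/-- The threshold separating the items at positions `≤ N` from those beyond. -/
lemma exists_threshold (N : ℕ) :
    ∃ h : ZMod f → ℕ, ∀ c i, N < E.e c i ↔ h c ≤ i := by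
  have hex : ∀ c, ∃ i, N < E.e c i := fun c => ⟨(N + 1) * (p - 1), by
    have := E.le_e c (N + 1); omega⟩
  classical
  refine ⟨fun c => Nat.find (hex c), fun c i => ⟨fun h => Nat.find_min' _ h, fun h => ?_⟩⟩
  exact lt_of_lt_of_le (Nat.find_spec (hex c)) (E.mono c h)

/-- Comparison of two collections at the highest position `N` where they differ. -/
lemma compare (hp : 2 ≤ p) {n n' : ZMod f → ℕ} (h : E.Phi n < E.Phi n') :
    ∃ (N : ℕ) (t : ZMod f → ℕ), (∀ c i, N < E.e c i ↔ t c ≤ i) ∧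
      (∀ c, n c ≠ n' c → n c ≤ t c ∧ n' c ≤ t c) ∧
      E.cnt n N < E.cnt n' N ∧
      (p ^ f - 1) * E.Phi n + (p - 1) * p ^ N ≤ (p ^ f - 1) * E.Phi n' := by
  obtain ⟨B, hB⟩ := E.exists_bound (fun c => max (n c) (n' c))
  have hB1 : ∀ c, ∀ i < n c, E.e c i < B := fun c i hi => hB c i (lt_max_of_lt_left hi)
  have hB2 : ∀ c, ∀ i < n' c, E.e c i < B := fun c i hi => hB c i (lt_max_of_lt_right hi)
  have e1 := E.Phi_eq_sum_cnt n B hB1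
  have e2 := E.Phi_eq_sum_cnt n' B hB2
  obtain ⟨N, hNB, hN, hhi⟩ := digit_compare hp (E.cnt n) (E.cnt n') B
    (fun j _ => E.cnt_le n j) (fun j _ => E.cnt_le n' j) (by rwa [← e1, ← e2])
  obtain ⟨t, ht⟩ := E.exists_threshold N
  have key : ∀ (m m' : ZMod f → ℕ) (c : ZMod f), (∀ c, ∀ i < m' c, E.e c i < B) →
      (∀ j, N < j → j < B → E.cnt m j = E.cnt m' j) → m c < m' c → m' c ≤ t c := by
    intro m m' c hb hagree hlt
    by_contra hcon
    push Not at hcon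
    have h1 : N < E.e c (m' c - 1) := (ht c _).mpr (by omega)
    have h2 := hagree _ h1 (hb c _ (by omega))
    have h3 : E.cnt m (E.e c (m' c - 1)) < E.cnt m' (E.e c (m' c - 1)) := by
      unfold cnt
      rw [E.typ]
      refine card_lt_card ⟨filter_subset_filter _ (range_mono hlt.le), fun hsub => ?_⟩
      have h4 : m' c - 1 ∈ (range (m' c)).filter (fun i => E.e c i = E.e c (m' c - 1)) := by
        simp; omega
      have h5 := mem_range.mp (mem_filter.mp (hsub h4)).1
      omega
    omega
  refine ⟨N, t, ht, fun c hc => ?_, hN, ?_⟩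
  · rcases lt_or_gt_of_ne hc with h1 | h1
    · have := key n n' c hB2 hhi h1
      omega
    · have := key n' n c hB1 (fun j a b => (hhi j a b).symm) h1
      omega
  · have hNn : n (N : ZMod f) < n' (N : ZMod f) := by
      by_contra hcon
      push Not at hcon
      have := E.cnt_mono (j := N) hcon
      omega
    -- digits of `n` below `N`, away from the residue class of `N`
    set a : ℕ → ℕ := fun j => if (j : ZMod f) = (N : ZMod f) then 0 else E.cnt n j with ha
    have h1 := digit_sum_avoid hp (NeZero.pos f) N a (fun j _ => by
      simp only [ha]; split_ifs
      · omega
      · exact E.cnt_le n j) (fun j _ hj => by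
        simp only [ha]; rw [if_pos ((ZMod.natCast_eq_natCast_iff _ _ _).mpr hj)])
    have h2 : ∑ j ∈ range N, E.cnt n j * p ^ j ≤
        ∑ j ∈ range N, E.cnt n' j * p ^ j + ∑ j ∈ range N, a j * p ^ j := by
      rw [← sum_add_distrib]
      refine sum_le_sum fun j _ => ?_
      rw [← add_mul]
      refine Nat.mul_le_mul_right _ ?_
      by_cases hj : (j : ZMod f) = (N : ZMod f)
      · have : E.cnt n j ≤ E.cnt n' j := E.cnt_mono (by rw [hj]; exact hNn.le)
        omega
      · simp [ha, hj]
    have h3 : E.Phi n + p ^ N ≤ E.Phi n' + ∑ j ∈ range N, a j * p ^ j := by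
      obtain ⟨r, rfl⟩ : ∃ r, B = N + 1 + r := ⟨B - (N + 1), by omega⟩
      have hsplit : ∀ g : ℕ → ℕ, ∑ j ∈ range (N + 1 + r), g j =
          ∑ j ∈ range N, g j + g N + ∑ x ∈ range r, g (N + 1 + x) := fun g => by
        rw [sum_range_add, sum_range_succ]
      rw [e1, e2, hsplit, hsplit]
      have h4 : ∑ x ∈ range r, E.cnt n (N + 1 + x) * p ^ (N + 1 + x) =
          ∑ x ∈ range r, E.cnt n' (N + 1 + x) * p ^ (N + 1 + x) :=
        sum_congr rfl fun x hx => by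
          rw [hhi _ (by omega) (by have := mem_range.mp hx; omega)]
      have h5 : (E.cnt n N + 1) * p ^ N ≤ E.cnt n' N * p ^ N := Nat.mul_le_mul_right _ hN
      rw [h4]
      rw [add_mul, one_mul] at h5
      omega
    have h6 := Nat.mul_le_mul_left (p ^ f - 1) h3
    rw [mul_add, mul_add] at h6
    omega

end Items

end MZVal

/-! ### Weights of admissible vectors -/

namespace MZVal

open Finset

set_option linter.unusedSectionVars false

variable {p f : ℕ} [NeZero f]

lemma digit_inj {p : ℕ} (hp : 2 ≤ p) (a b : ℕ → ℕ) (B : ℕ) (ha : ∀ j < B, a j ≤ p - 1)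
    (hb : ∀ j < B, b j ≤ p - 1)
    (h : ∑ j ∈ range B, a j * p ^ j = ∑ j ∈ range B, b j * p ^ j) : ∀ j < B, a j = b j := by
  induction B with
  | zero => intro j hj; omega
  | succ B ih =>
    rw [sum_range_succ, sum_range_succ] at h
    have h1 := digit_sum_lt hp a B (fun j hj => ha j (by omega))
    have h2 := digit_sum_lt hp b B (fun j hj => hb j (by omega))
    have heq : a B = b B := by
      rcases lt_trichotomy (a B) (b B) with hlt | heq | hgt
      · have : (a B + 1) * p ^ B ≤ b B * p ^ B := Nat.mul_le_mul_right _ hlt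
        rw [add_mul, one_mul] at this
        omega
      · exact heq
      · have : (b B + 1) * p ^ B ≤ a B * p ^ B := Nat.mul_le_mul_right _ hgt
        rw [add_mul, one_mul] at this
        omega
    rw [heq] at h
    intro j hj
    rcases Nat.lt_succ_iff_lt_or_eq.mp hj with h7 | h7
    · exact ih (fun j hj => ha j (by omega)) (fun j hj => hb j (by omega)) (by omega) j h7
    · rw [h7, heq]

namespace Items

variable (E : Items p f)

lemma cnt_lt_of_lt {m m' : ZMod f → ℕ} {c : ZMod f} (hlt : m c < m' c) :
    E.cnt m (E.e c (m' c - 1)) < E.cnt m' (E.e c (m' c - 1)) := by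
  unfold cnt
  rw [E.typ]
  refine card_lt_card ⟨filter_subset_filter _ (range_mono hlt.le), fun hsub => ?_⟩
  have h4 : m' c - 1 ∈ (range (m' c)).filter (fun i => E.e c i = E.e c (m' c - 1)) := by
    simp; omega
  have h5 := mem_range.mp (mem_filter.mp (hsub h4)).1
  omega

lemma Phi_inj (hp : 2 ≤ p) {n n' : ZMod f → ℕ} (h : E.Phi n = E.Phi n') : n = n' := by
  obtain ⟨B, hB⟩ := E.exists_bound (fun c => max (n c) (n' c))
  have hB1 : ∀ c, ∀ i < n c, E.e c i < B := fun c i hi => hB c i (lt_max_of_lt_left hi)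
  have hB2 : ∀ c, ∀ i < n' c, E.e c i < B := fun c i hi => hB c i (lt_max_of_lt_right hi)
  rw [E.Phi_eq_sum_cnt n B hB1, E.Phi_eq_sum_cnt n' B hB2] at h
  have h1 := digit_inj hp _ _ B (fun j _ => E.cnt_le n j) (fun j _ => E.cnt_le n' j) h
  ext c
  rcases lt_trichotomy (n c) (n' c) with h2 | h2 | h2
  · have h3 := E.cnt_lt_of_lt h2
    have h4 := h1 _ (hB2 c (n' c - 1) (by omega))
    omega
  · exact h2
  · have h3 := E.cnt_lt_of_lt h2
    have h4 := h1 _ (hB1 c (n c - 1) (by omega))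
    omega

lemma phi_convex (hp : 2 ≤ p) (c : ZMod f) {a b m m' : ℕ} (h : a + b = m + m')
    (ha : a ≤ max m m') (hb : b ≤ max m m') :
    E.phi c a + E.phi c b ≤ E.phi c m + E.phi c m' := by
  wlog hm : m ≤ m' generalizing m m'
  · rw [add_comm (E.phi c m)]
    exact this (by omega) (by rwa [max_comm]) (by rwa [max_comm]) (by omega)
  rw [max_eq_right hm] at ha hb
  -- `m ≤ b`, and `a = m + t`, `m' = b + t`
  have h1 := E.phi_add_le hp c (show m ≤ b by omega) (a - m)
  rw [show m + (a - m) = a by omega, show b + (a - m) = m' by omega] at h1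
  omega

end Items

/-- The data for the relaxed optimization problem: an item list, a modulus `Q`, a base vector `B`
fixing the congruence classes modulo `Q`, and caps on the number of items of each type. -/
structure Sys (p f : ℕ) [NeZero f] where
  E : Items p f
  Q : ℤ
  B : ZMod f → ℤ
  cap : ZMod f → ℕ
  two_le : 2 ≤ p
  Q_pos : 0 < Q
  B_dvd : ∀ c, Q ∣ (p : ℤ) * B (c + 1) - B c

namespace Sys

variable (S : Sys p f)

/-- The cyclic difference `p A_{c+1} - A_c`; it is `Q` times the number of items of type `c`. -/
def df (_ : Sys p f) (A : ZMod f → ℤ) (c : ZMod f) : ℤ := (p : ℤ) * A (c + 1) - A c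

/-- Admissible vectors: in the congruence class of `B`, with item counts between `0` and `cap`. -/
def V (A : ZMod f → ℤ) : Prop :=
  (∀ c, S.Q ∣ A c - S.B c) ∧ ∀ c, 0 ≤ S.df A c ∧ S.df A c ≤ S.Q * S.cap c

/-- The number of items of type `c` encoded by the vector `A`. -/
noncomputable def cn (A : ZMod f → ℤ) (c : ZMod f) : ℕ := (S.df A c / S.Q).toNat

/-- The least value of a collection of items with counts given by `A`. -/
noncomputable def W (A : ZMod f → ℤ) : ℕ := S.E.Phi (S.cn A)

variable {S}

lemma dvd_df {A : ZMod f → ℤ} (h : ∀ c, S.Q ∣ A c - S.B c) (c : ZMod f) : S.Q ∣ S.df A c := by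
  have h1 : S.df A c = (p * S.B (c + 1) - S.B c) + p * (A (c + 1) - S.B (c + 1)) -
      (A c - S.B c) := by unfold df; ring
  rw [h1]
  exact dvd_sub (dvd_add (S.B_dvd c) (Dvd.dvd.mul_left (h _) _)) (h c)

lemma V.cn_spec {A : ZMod f → ℤ} (h : S.V A) (c : ZMod f) : S.Q * (S.cn A c : ℤ) = S.df A c := by
  unfold cn
  rw [Int.toNat_of_nonneg (Int.ediv_nonneg (h.2 c).1 S.Q_pos.le)]
  exact Int.mul_ediv_cancel' (dvd_df h.1 c)

lemma V.cn_le_iff {A A' : ZMod f → ℤ} (h : S.V A) (h' : S.V A') (c : ZMod f) :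
    S.cn A c ≤ S.cn A' c ↔ S.df A c ≤ S.df A' c := by
  rw [← h.cn_spec, ← h'.cn_spec, mul_le_mul_iff_right₀ S.Q_pos]
  exact Int.ofNat_le.symm

lemma V.cn_le_nat {A : ZMod f → ℤ} (h : S.V A) (c : ZMod f) (m : ℕ) :
    S.cn A c ≤ m ↔ S.df A c ≤ S.Q * m := by
  rw [← h.cn_spec, mul_le_mul_iff_right₀ S.Q_pos]
  exact Int.ofNat_le.symm

lemma V.cn_le_cap {A : ZMod f → ℤ} (h : S.V A) (c : ZMod f) : S.cn A c ≤ S.cap c :=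
  (h.cn_le_nat c _).2 (h.2 c).2

/-- Congruent numbers that differ do so by at least `Q`. -/
lemma add_Q_le {A A' : ZMod f → ℤ} (h : ∀ c, S.Q ∣ A c - S.B c) (h' : ∀ c, S.Q ∣ A' c - S.B c)
    {c : ZMod f} (hlt : A c < A' c) : A c + S.Q ≤ A' c := by
  have h1 : S.Q ∣ A' c - A c := by
    have := dvd_sub (h' c) (h c)
    rwa [sub_sub_sub_cancel_right] at this
  have := Int.le_of_dvd (by omega) h1
  omega

/-- The counts determine the vector. -/
lemma df_inj {A A' : ZMod f → ℤ} (h : ∀ c, S.df A c = S.df A' c) : A = A' := by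
  have h1 : ∀ (i : ℕ) c, A c - A' c = (p : ℤ) ^ i * (A (c + i) - A' (c + i)) := by
    intro i
    induction i with
    | zero => intro c; simp
    | succ i ih =>
      intro c
      have h2 := h (c + i)
      unfold df at h2
      rw [ih c, pow_succ, mul_assoc]
      push_cast
      rw [← add_assoc]
      congr 1
      linarith
  ext c
  have h2 := h1 f c
  rw [ZMod.natCast_self, add_zero] at h2
  have h3 : (2 : ℤ) ≤ (p : ℤ) ^ f := by
    have h4 := S.two_le
    have h5 : p ^ 1 ≤ p ^ f := Nat.pow_le_pow_right (by omega) (NeZero.pos f)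
    have : 2 ≤ p ^ f := by rw [pow_one] at h5; omega
    exact_mod_cast this
  have h4 : ((p : ℤ) ^ f - 1) * (A c - A' c) = 0 := by linarith
  rcases mul_eq_zero.mp h4 with h5 | h5 <;> omega

lemma V.W_inj {A A' : ZMod f → ℤ} (h : S.V A) (h' : S.V A') (hW : S.W A = S.W A') : A = A' := by
  have h1 := S.E.Phi_inj S.two_le hW
  refine df_inj (S := S) fun c => ?_
  rw [← h.cn_spec, ← h'.cn_spec, h1]

/-- Convexity of the weight: vectors whose counts have the same sum, and are less spread out. -/
lemma V.W_convex {a b x y : ZMod f → ℤ} (ha : S.V a) (hb : S.V b) (hx : S.V x) (hy : S.V y)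
    (hsum : ∀ c, S.df a c + S.df b c = S.df x c + S.df y c)
    (h1 : ∀ c, S.df a c ≤ max (S.df x c) (S.df y c))
    (h2 : ∀ c, S.df b c ≤ max (S.df x c) (S.df y c)) : S.W a + S.W b ≤ S.W x + S.W y := by
  unfold W Items.Phi
  rw [← sum_add_distrib, ← sum_add_distrib]
  refine sum_le_sum fun c _ => S.E.phi_convex S.two_le c ?_ ?_ ?_
  · have := hsum c
    rw [← ha.cn_spec, ← hb.cn_spec, ← hx.cn_spec, ← hy.cn_spec, ← mul_add, ← mul_add] at this
    have := mul_left_cancel₀ S.Q_pos.ne' this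
    exact_mod_cast this
  · rw [le_max_iff, ha.cn_le_iff hx, ha.cn_le_iff hy, ← le_max_iff]; exact h1 c
  · rw [le_max_iff, hb.cn_le_iff hx, hb.cn_le_iff hy, ← le_max_iff]; exact h2 c

lemma dvd_min {x y : ZMod f → ℤ} (hx : ∀ c, S.Q ∣ x c - S.B c) (hy : ∀ c, S.Q ∣ y c - S.B c)
    (c : ZMod f) : S.Q ∣ min (x c) (y c) - S.B c := by
  rcases min_choice (x c) (y c) with h | h <;> rw [h]
  · exact hx c
  · exact hy c

lemma dvd_max {x y : ZMod f → ℤ} (hx : ∀ c, S.Q ∣ x c - S.B c) (hy : ∀ c, S.Q ∣ y c - S.B c)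
    (c : ZMod f) : S.Q ∣ max (x c) (y c) - S.B c := by
  rcases max_choice (x c) (y c) with h | h <;> rw [h]
  · exact hx c
  · exact hy c

lemma df_min (x y : ZMod f → ℤ) (c : ZMod f) :
    min (S.df x c) (S.df y c) ≤ S.df (fun c => min (x c) (y c)) c ∧
      S.df (fun c => min (x c) (y c)) c ≤ max (S.df x c) (S.df y c) := by
  have hp := S.two_le
  have hp' : (0 : ℤ) ≤ p := by positivity
  unfold df
  simp only
  rw [mul_min_of_nonneg _ _ hp']
  omega

lemma df_max (x y : ZMod f → ℤ) (c : ZMod f) :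
    min (S.df x c) (S.df y c) ≤ S.df (fun c => max (x c) (y c)) c ∧
      S.df (fun c => max (x c) (y c)) c ≤ max (S.df x c) (S.df y c) := by
  have hp := S.two_le
  have hp' : (0 : ℤ) ≤ p := by positivity
  unfold df
  simp only
  rw [mul_max_of_nonneg _ _ hp']
  omega

lemma V.min {x y : ZMod f → ℤ} (hx : S.V x) (hy : S.V y) : S.V (fun c => min (x c) (y c)) := by
  refine ⟨dvd_min hx.1 hy.1, fun c => ?_⟩
  have h := df_min (S := S) x y c
  have h1 := hx.2 c
  have h2 := hy.2 c
  omega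

lemma V.max {x y : ZMod f → ℤ} (hx : S.V x) (hy : S.V y) : S.V (fun c => max (x c) (y c)) := by
  refine ⟨dvd_max hx.1 hy.1, fun c => ?_⟩
  have h := df_max (S := S) x y c
  have h1 := hx.2 c
  have h2 := hy.2 c
  omega

/-- Submodularity of the weight on the lattice of admissible vectors. -/
lemma V.W_min_add_max {x y : ZMod f → ℤ} (hx : S.V x) (hy : S.V y) :
    S.W (fun c => Min.min (x c) (y c)) + S.W (fun c => Max.max (x c) (y c)) ≤ S.W x + S.W y := by
  refine V.W_convex (hx.min hy) (hx.max hy) hx hy (fun c => ?_) (fun c => (df_min x y c).2)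
    (fun c => (df_max x y c).2)
  unfold df
  have h1 := min_add_max (x c) (y c)
  have h2 := min_add_max (x (c + 1)) (y (c + 1))
  simp only
  linear_combination (p : ℤ) * h2 - h1

/-- The largest vector below `z` with nonnegative cyclic differences (for `z > 0`). -/
noncomputable def clos (_ : Sys p f) (z : ZMod f → ℤ) (c : ZMod f) : ℤ :=
  (range f).inf' ⟨0, mem_range.mpr (NeZero.pos f)⟩ (fun i => (p : ℤ) ^ i * z (c + i))

lemma one_le_pow' (S : Sys p f) (i : ℕ) : (1 : ℤ) ≤ (p : ℤ) ^ i := by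
  have := S.two_le
  exact_mod_cast Nat.one_le_pow _ _ (by omega)

lemma clos_le_pow {z : ZMod f → ℤ} (hz : ∀ c, 0 < z c) (c : ZMod f) (i : ℕ) :
    S.clos z c ≤ (p : ℤ) ^ i * z (c + i) := by
  have h1 : S.clos z c ≤ (p : ℤ) ^ (i % f) * z (c + (i % f : ℕ)) :=
    inf'_le _ (mem_range.mpr (Nat.mod_lt _ (NeZero.pos f)))
  rw [ZMod.natCast_mod] at h1
  refine h1.trans (mul_le_mul_of_nonneg_right ?_ (hz _).le)
  have h2 := S.two_le
  exact_mod_cast Nat.pow_le_pow_right (by omega : 0 < p) (Nat.mod_le i f)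

lemma clos_le {z : ZMod f → ℤ} (hz : ∀ c, 0 < z c) (c : ZMod f) : S.clos z c ≤ z c := by
  simpa using clos_le_pow (S := S) hz c 0

lemma exists_clos_eq (z : ZMod f → ℤ) (c : ZMod f) :
    ∃ i : ℕ, S.clos z c = (p : ℤ) ^ i * z (c + i) := by
  obtain ⟨i, _, hi⟩ := exists_mem_eq_inf' (s := range f) ⟨0, mem_range.mpr (NeZero.pos f)⟩
    (fun i => (p : ℤ) ^ i * z (c + i))
  exact ⟨i, hi⟩

lemma df_clos_nonneg {z : ZMod f → ℤ} (hz : ∀ c, 0 < z c) (c : ZMod f) :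
    0 ≤ S.df (S.clos z) c := by
  obtain ⟨i, hi⟩ := exists_clos_eq (S := S) z (c + 1)
  have h1 := clos_le_pow (S := S) hz c (i + 1)
  unfold df
  rw [hi]
  push_cast at h1
  rw [add_comm (i : ZMod f) 1, ← add_assoc, pow_succ] at h1
  linarith

lemma clos_eq_or {z : ZMod f → ℤ} (hz : ∀ c, 0 < z c) (c : ZMod f) :
    S.clos z c = z c ∨ S.df (S.clos z) c = 0 := by
  obtain ⟨i, hi⟩ := exists_clos_eq (S := S) z c
  rcases i with _ | i
  · left; simpa using hi
  · right
    have h1 := clos_le_pow (S := S) hz (c + 1) i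
    have h2 := df_clos_nonneg (S := S) hz c
    have h3 := S.two_le
    unfold df at h2 ⊢
    push_cast at hi
    rw [add_comm (i : ZMod f) 1, ← add_assoc, pow_succ] at hi
    have h4 : (p : ℤ) * S.clos z (c + 1) ≤ p * (p ^ i * z (c + 1 + i)) :=
      mul_le_mul_of_nonneg_left h1 (by positivity)
    linarith

lemma df_clos_le {z : ZMod f → ℤ} (hz : ∀ c, 0 < z c) (c : ZMod f) :
    S.df (S.clos z) c ≤ max 0 (S.df z c) := by
  rcases clos_eq_or (S := S) hz c with h | h
  · refine le_max_of_le_right ?_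
    unfold df
    rw [h]
    have := mul_le_mul_of_nonneg_left (clos_le (S := S) hz (c + 1)) (by positivity : (0 : ℤ) ≤ p)
    linarith
  · rw [h]; exact le_max_left _ _

lemma dvd_clos {z : ZMod f → ℤ} (h : ∀ c, S.Q ∣ z c - S.B c) (c : ZMod f) :
    S.Q ∣ S.clos z c - S.B c := by
  obtain ⟨i, hi⟩ := exists_clos_eq (S := S) z c
  rw [hi]
  have h1 : ∀ (i : ℕ) c, S.Q ∣ (p : ℤ) ^ i * S.B (c + i) - S.B c := by
    intro i
    induction i with
    | zero => intro c; simp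
    | succ i ih =>
      intro c
      have h2 := dvd_add (Dvd.dvd.mul_left (S.B_dvd (c + i)) ((p : ℤ) ^ i)) (ih c)
      push_cast
      rw [← add_assoc]
      have h3 : (p : ℤ) ^ (i + 1) * S.B (c + i + 1) - S.B c =
          (p : ℤ) ^ i * (p * S.B (c + i + 1) - S.B (c + i)) + (p ^ i * S.B (c + i) - S.B c) := by
        ring
      rwa [h3]
  have h2 := dvd_add (Dvd.dvd.mul_left (h (c + i)) ((p : ℤ) ^ i)) (h1 i c)
  have h3 : (p : ℤ) ^ i * z (c + i) - S.B c =
      (p : ℤ) ^ i * (z (c + i) - S.B (c + i)) + (p ^ i * S.B (c + i) - S.B c) := by ring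
  rwa [h3]

lemma lt_clos {z : ZMod f → ℤ} {m : ℤ} (hm : 0 ≤ m) (hz : ∀ c, m < z c) (c : ZMod f) :
    m < S.clos z c := by
  obtain ⟨i, hi⟩ := exists_clos_eq (S := S) z c
  rw [hi]
  have h1 := S.one_le_pow' i
  have h2 := hz (c + i)
  nlinarith

lemma le_clos {x z : ZMod f → ℤ} (hx : ∀ c, 0 ≤ S.df x c) (h : ∀ c, x c ≤ z c) (c : ZMod f) :
    x c ≤ S.clos z c := by
  obtain ⟨i, hi⟩ := exists_clos_eq (S := S) z c
  have h1 : ∀ (i : ℕ) c, x c ≤ (p : ℤ) ^ i * x (c + i) := by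
    intro i
    induction i with
    | zero => intro c; simp
    | succ i ih =>
      intro c
      have h2 := hx (c + i)
      have h3 := S.one_le_pow' i
      have h4 := ih c
      unfold df at h2
      push_cast
      rw [← add_assoc, pow_succ]
      nlinarith
  rw [hi]
  exact (h1 i c).trans (mul_le_mul_of_nonneg_left (h _) (by positivity))

lemma clos_add_le {z z' : ZMod f → ℤ} (hz : ∀ c, 0 < z c) (h : ∀ c, z c + S.Q ≤ z' c)
    (c : ZMod f) : S.clos z c + S.Q ≤ S.clos z' c := by
  obtain ⟨i, hi⟩ := exists_clos_eq (S := S) z' c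
  rw [hi]
  have h1 := clos_le_pow (S := S) hz c i
  have h2 := S.one_le_pow' i
  have h3 := h (c + i)
  have h4 := S.Q_pos
  nlinarith

lemma V_clos {z : ZMod f → ℤ} (hz : ∀ c, 0 < z c) (h : ∀ c, S.Q ∣ z c - S.B c)
    (hcap : ∀ c, S.df z c ≤ S.Q * S.cap c) : S.V (S.clos z) := by
  refine ⟨dvd_clos h, fun c => ⟨df_clos_nonneg hz c, (df_clos_le hz c).trans ?_⟩⟩
  refine max_le ?_ (hcap c)
  have := S.Q_pos
  positivity

end Sys

end MZVal

/-! ### The greedy chain -/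

namespace MZVal

open Finset

set_option linter.unusedSectionVars false

variable {p f : ℕ} [NeZero f]

namespace Sys

/-- The admissible vectors `z` with `b Q < z ≤ X - Q`. -/
def Box (S : Sys p f) (b : ℕ) (X z : ZMod f → ℤ) : Prop :=
  S.V z ∧ (∀ c, z c + S.Q ≤ X c) ∧ ∀ c, b * S.Q < z c

/-- `x` has minimal weight in its box. -/
def IsMin (S : Sys p f) (b : ℕ) (X x : ZMod f → ℤ) : Prop :=
  S.Box b X x ∧ ∀ z, S.Box b X z → S.W x ≤ S.W z

/-- Relaxed chains below `X`: sequences of positive admissible vectors descending by at least `Q`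
in each step. The lower bound in `Box` is the one forced by the length of the rest of the chain. -/
def RC (S : Sys p f) : (ZMod f → ℤ) → List (ZMod f → ℤ) → Prop
  | _, [] => True
  | X, a :: L => S.Box L.length X a ∧ RC S a L

/-- The counts decrease along the list, starting from the bound `n`. -/
def Nested (S : Sys p f) : (ZMod f → ℕ) → List (ZMod f → ℤ) → Prop
  | _, [] => True
  | n, a :: L => (∀ c, S.cn a c ≤ n c) ∧ Nested S (S.cn a) L

/-- The total weight of a list of vectors. -/
noncomputable def WS (S : Sys p f) (L : List (ZMod f → ℤ)) : ℕ := (L.map S.W).sum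

variable {S : Sys p f}

lemma WS_cons (a : ZMod f → ℤ) (L : List (ZMod f → ℤ)) : S.WS (a :: L) = S.W a + S.WS L := by
  simp [WS]

lemma RC.mono {X X' : ZMod f → ℤ} {L : List (ZMod f → ℤ)} (h : S.RC X L) (hX : ∀ c, X c ≤ X' c) :
    S.RC X' L := by
  cases L with
  | nil => trivial
  | cons a L => exact ⟨⟨h.1.1, fun c => (h.1.2.1 c).trans (hX c), h.1.2.2⟩, h.2⟩

lemma df_sub_const (x : ZMod f → ℤ) (m : ℤ) (c : ZMod f) :
    S.df (fun c => x c - m) c = S.df x c - (p - 1) * m := by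
  unfold df; ring

lemma exists_box {b : ℕ} {X : ZMod f → ℤ} (hX : S.V X) (h : ∀ c, (b + 1) * S.Q < X c) :
    ∃ z, S.Box b X z := by
  have hQ := S.Q_pos
  have hp : (2 : ℤ) ≤ p := by exact_mod_cast S.two_le
  have h1 : ∀ c, b * S.Q < X c - S.Q := fun c => by have := h c; linarith
  have h0 : ∀ c, 0 < X c - S.Q := fun c => lt_of_le_of_lt (by positivity) (h1 c)
  refine ⟨S.clos (fun c => X c - S.Q), V_clos h0 (fun c => ?_) (fun c => ?_), fun c => ?_, ?_⟩
  · have := dvd_sub (hX.1 c) (dvd_refl S.Q)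
    rwa [sub_right_comm] at this
  · rw [df_sub_const]
    have := (hX.2 c).2
    nlinarith
  · have := clos_le (S := S) h0 c
    linarith
  · exact lt_clos (by positivity) h1

lemma exists_isMin {b : ℕ} {X : ZMod f → ℤ} (hX : S.V X) (h : ∀ c, (b + 1) * S.Q < X c) :
    ∃ z, S.IsMin b X z := by
  obtain ⟨z, hz, hmin⟩ := (measure S.W).wf.has_min {z | S.Box b X z} (exists_box hX h)
  exact ⟨z, hz, fun z' hz' => not_lt.mp (hmin z' hz')⟩

/-- Raising the minimizer `x` to a larger vector `y` only touches types all of whose items lie at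
positions up to the one where the weights of `x` and `y` first differ. -/
lemma IsMin.count_le {b : ℕ} {X x y : ZMod f → ℤ} (hx : S.IsMin b X x) (hy : S.Box b X y)
    (hxy : ∀ c, x c ≤ y c) {N : ℕ} {t : ZMod f → ℕ} (ht : ∀ c i, N < S.E.e c i ↔ t c ≤ i)
    (hdiff : ∀ c, S.cn x c ≠ S.cn y c → S.cn x c ≤ t c ∧ S.cn y c ≤ t c)
    {c : ZMod f} (hc : x c < y c) : S.cn x c ≤ t c := by
  by_contra hcon
  push Not at hcon
  have hQ := S.Q_pos
  have hp : (2 : ℤ) ≤ p := by exact_mod_cast S.two_le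
  have hVx := hx.1.1
  have hVy := hy.1
  have heq : S.cn x c = S.cn y c := by
    by_contra h
    have := (hdiff c h).1
    omega
  have hdf : S.df x c = S.df y c := by rw [← hVx.cn_spec, ← hVy.cn_spec, heq]
  have hc1 : x (c + 1) < y (c + 1) := by
    unfold df at hdf
    by_contra h
    have h2 : x (c + 1) = y (c + 1) := le_antisymm (hxy _) (not_lt.mp h)
    rw [h2] at hdf
    linarith
  have hcQ := add_Q_le hVx.1 hVy.1 hc
  have hc1Q := add_Q_le hVx.1 hVy.1 hc1
  -- lower `y` by `Q` wherever this keeps it above `x`; the closure is a competitor of `x`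
  set v : ZMod f → ℤ := fun c => max (x c) (y c - S.Q) with hv
  have hvb : ∀ c, b * S.Q < v c := fun c => lt_of_lt_of_le (hx.1.2.2 c) (le_max_left _ _)
  have hv0 : ∀ c, 0 < v c := fun c => lt_of_le_of_lt (by positivity) (hvb c)
  have hdy : ∀ c, S.df (fun c => y c - S.Q) c ≤ S.df y c := fun c => by
    rw [df_sub_const]; nlinarith
  have hdv : ∀ c, S.df v c ≤ max (S.df x c) (S.df y c) := fun c =>
    (df_max (S := S) x (fun c => y c - S.Q) c).2.trans (max_le_max le_rfl (hdy c))
  have hvd : ∀ c, S.Q ∣ v c - S.B c := dvd_max hVx.1 (fun c => by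
    have := dvd_sub (hVy.1 c) (dvd_refl S.Q)
    rwa [sub_right_comm] at this)
  have hVs : S.V (S.clos v) := V_clos hv0 hvd fun c =>
    (hdv c).trans (max_le (hVx.2 c).2 (hVy.2 c).2)
  have hbox : S.Box b X (S.clos v) := by
    refine ⟨hVs, fun c => ?_, lt_clos (by positivity) hvb⟩
    have h1 := clos_le (S := S) hv0 c
    have h2 := hx.1.2.1 c
    have h3 := hy.2.1 c
    have h4 : v c + S.Q ≤ X c := by
      simp only [hv]
      omega
    linarith
  have hmin := hx.2 _ hbox
  have hle : ∀ c, S.cn (S.clos v) c ≤ max (S.cn x c) (S.cn y c) := fun c => by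
    rw [le_max_iff, hVs.cn_le_iff hVx, hVs.cn_le_iff hVy, ← le_max_iff]
    refine (df_clos_le hv0 c).trans (max_le ?_ (hdv c))
    exact le_max_of_le_left (hVx.2 c).1
  have hlt : S.cn (S.clos v) c + 1 ≤ S.cn x c := by
    have h1 : S.df v c ≤ S.df x c - S.Q := by
      have h2 : v c = y c - S.Q := max_eq_right (by linarith)
      have h3 : v (c + 1) = y (c + 1) - S.Q := max_eq_right (by linarith)
      rw [hdf]
      unfold df
      rw [h2, h3]
      nlinarith
    have h4 : S.df (S.clos v) c ≤ S.Q * ((S.cn x c - 1 : ℕ) : ℤ) := by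
      have h5 : ((S.cn x c - 1 : ℕ) : ℤ) = (S.cn x c : ℤ) - 1 := by
        push_cast [Nat.cast_sub (show 1 ≤ S.cn x c by omega)]; ring
      refine (df_clos_le hv0 c).trans (max_le (by positivity) ?_)
      rw [h5, mul_sub, hVx.cn_spec, mul_one]
      exact h1
    have := (hVs.cn_le_nat c _).2 h4
    omega
  have hphi : ∀ d, S.E.phi d (S.cn (S.clos v) d) + (if d = c then p ^ (N + 1) else 0) ≤
      S.E.phi d (S.cn x d) + S.E.phi d (t d) := by
    intro d
    split_ifs with hd
    · subst hd
      have h1 := S.E.phi_mono d hlt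
      have h2 : N < S.E.e d (S.cn (S.clos v) d) ∨ S.cn (S.clos v) d < t d := by
        rw [ht]; omega
      have h3 := S.E.phi_succ d (S.cn x d - 1)
      rw [Nat.sub_add_cancel (by omega)] at h3
      have h4 : N < S.E.e d (S.cn x d - 1) := (ht d _).mpr (by omega)
      have h5 : p ^ (N + 1) ≤ p ^ (S.E.e d (S.cn x d - 1)) :=
        Nat.pow_le_pow_right (by have := S.two_le; omega) h4
      have h6 := S.E.phi_mono d (show S.cn (S.clos v) d ≤ S.cn x d - 1 by omega)
      omega
    · have h1 := hle d
      rcases le_or_gt (S.cn y d) (S.cn x d) with h2 | h2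
      · have := S.E.phi_mono d (show S.cn (S.clos v) d ≤ S.cn x d by omega)
        omega
      · have h3 := (hdiff d (by omega)).2
        have := S.E.phi_mono d (show S.cn (S.clos v) d ≤ t d by omega)
        omega
  have hsum := sum_le_sum (s := univ) fun d _ => hphi d
  rw [sum_add_distrib, sum_add_distrib, sum_ite_eq' univ c] at hsum
  simp only [mem_univ, if_true] at hsum
  have hlt2 := S.E.Phi_lt S.two_le t (N + 1) (fun d i hi => by
    by_contra h
    have := (ht d i).mp (by omega)
    omega)
  unfold W at hmin
  unfold Items.Phi at hmin hlt2
  omega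

/-- The vectors obtained from the list by cutting its `l`-th entry off at `x - (i + 1 + l) Q`. -/
noncomputable def cut (S : Sys p f) (x : ZMod f → ℤ) :
    ℕ → List (ZMod f → ℤ) → List (ZMod f → ℤ)
  | _, [] => []
  | i, a :: w => S.clos (fun c => min (a c) (x c - (i + 1 : ℕ) * S.Q)) :: cut S x (i + 1) w

lemma length_cut (x : ZMod f → ℤ) (i : ℕ) (w : List (ZMod f → ℤ)) :
    (S.cut x i w).length = w.length := by
  induction w generalizing i with
  | nil => rfl
  | cons a w ih => simp [cut, ih]

/-- The facts about a single cut-off vector used below. -/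
lemma cut_aux {x a : ZMod f → ℤ} (hx : S.V x) (ha : S.V a) (i m : ℕ)
    (hxm : ∀ c, ((m + i : ℕ) : ℤ) * S.Q < x c) (ham : ∀ c, m * S.Q < a c) :
    (∀ c, m * S.Q < min (a c) (x c - i * S.Q)) ∧
    S.V (S.clos (fun c => min (a c) (x c - i * S.Q))) ∧
    ∀ c, S.cn (S.clos (fun c => min (a c) (x c - i * S.Q))) c ≤ S.cn a c ∨
      (x c - i * S.Q < a c ∧
        S.cn (S.clos (fun c => min (a c) (x c - i * S.Q))) c ≤ S.cn x c - i * (p - 1)) := by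
  have hQ := S.Q_pos
  have hp : (2 : ℤ) ≤ p := by exact_mod_cast S.two_le
  have hp2 := S.two_le
  have h1 : ∀ c, m * S.Q < min (a c) (x c - i * S.Q) := fun c => by
    have h2 := hxm c
    push_cast at h2
    exact lt_min (ham c) (by linarith)
  have h0 : ∀ c, 0 < min (a c) (x c - i * S.Q) := fun c => lt_of_le_of_lt (by positivity) (h1 c)
  have hd : ∀ c, S.Q ∣ min (a c) (x c - i * S.Q) - S.B c := dvd_min ha.1 (fun c => by
    have := dvd_sub (hx.1 c) (Dvd.intro_left (i : ℤ) (rfl : (i : ℤ) * S.Q = _))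
    rwa [sub_right_comm] at this)
  have hdx : ∀ c, S.df (fun c => x c - i * S.Q) c ≤ S.df x c := fun c => by
    rw [df_sub_const]
    have : 0 ≤ ((p : ℤ) - 1) * (i * S.Q) := mul_nonneg (by linarith) (by positivity)
    linarith
  have hV : S.V (S.clos (fun c => min (a c) (x c - i * S.Q))) := by
    refine V_clos h0 hd fun c => ?_
    refine (df_min (S := S) a (fun c => x c - i * S.Q) c).2.trans (max_le (ha.2 c).2 ?_)
    exact (hdx c).trans (hx.2 c).2
  refine ⟨h1, hV, fun c => ?_⟩
  have h3 := df_clos_le (S := S) h0 c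
  have hmul : (p : ℤ) * min (a (c + 1)) (x (c + 1) - i * S.Q) ≤ p * a (c + 1) ∧
      (p : ℤ) * min (a (c + 1)) (x (c + 1) - i * S.Q) ≤ p * (x (c + 1) - i * S.Q) :=
    ⟨mul_le_mul_of_nonneg_left (min_le_left _ _) (by positivity),
      mul_le_mul_of_nonneg_left (min_le_right _ _) (by positivity)⟩
  rcases le_or_gt (a c) (x c - i * S.Q) with h4 | h4
  · left
    rw [hV.cn_le_iff ha]
    refine h3.trans (max_le (ha.2 c).1 ?_)
    unfold df
    simp only
    rw [min_eq_left h4]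
    linarith [hmul.1]
  · right
    refine ⟨h4, ?_⟩
    rw [hV.cn_le_nat]
    refine h3.trans (max_le (by positivity) ?_)
    have h5 : S.df (fun c => min (a c) (x c - i * S.Q)) c ≤ S.df x c - (p - 1) * (i * S.Q) := by
      rw [← df_sub_const]
      unfold df
      simp only
      rw [min_eq_right h4.le]
      linarith [hmul.2]
    refine h5.trans ?_
    rw [← hx.cn_spec]
    have h6 : (S.cn x c : ℤ) - i * (p - 1) ≤ ((S.cn x c - i * (p - 1) : ℕ) : ℤ) := by
      have h8 : ((i * (p - 1) : ℕ) : ℤ) = (i : ℤ) * (p - 1) := by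
        push_cast [Nat.cast_sub (show 1 ≤ p by omega)]; ring
      omega
    nlinarith

lemma cut_RC {x u : ZMod f → ℤ} (hx : S.V x) (i : ℕ) (w : List (ZMod f → ℤ)) (hw : S.RC u w)
    (hxm : ∀ c, ((w.length + i : ℕ) : ℤ) * S.Q < x c) :
    S.RC (S.clos (fun c => min (u c) (x c - i * S.Q))) (S.cut x i w) := by
  induction w generalizing u i with
  | nil => trivial
  | cons a w ih =>
    have hQ := S.Q_pos
    have hxm' : ∀ c, ((w.length + (i + 1) : ℕ) : ℤ) * S.Q < x c := fun c => by
      have := hxm c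
      rw [List.length_cons] at this
      rwa [show w.length + (i + 1) = w.length + 1 + i by ring]
    obtain ⟨h1, h2, -⟩ := cut_aux hx hw.1.1 (i + 1) w.length hxm' hw.1.2.2
    refine ⟨⟨h2, ?_, ?_⟩, ih (i + 1) hw.2 hxm'⟩
    · refine clos_add_le (fun c => lt_of_le_of_lt (by positivity) (h1 c)) fun c => ?_
      have h3 := hw.1.2.1 c
      push_cast
      rw [add_mul, one_mul]
      omega
    · rw [length_cut]
      exact lt_clos (by positivity) h1

lemma cut_WS {x Y u : ZMod f → ℤ} (hx : S.V x) (i : ℕ) (w : List (ZMod f → ℤ)) (hw : S.RC u w)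
    (hxm : ∀ c, ((w.length + i : ℕ) : ℤ) * S.Q < x c) (hu : ∀ c, u c + i * S.Q ≤ Y c) :
    (p ^ f - 1) * S.WS (S.cut x i w) ≤ (p ^ f - 1) * S.WS w +
      S.E.Phi (fun c => if x c < Y c then S.cn x c - i * (p - 1) else 0) := by
  induction w generalizing u i with
  | nil => simp [cut, WS]
  | cons a w ih =>
    have hQ := S.Q_pos
    have hxm' : ∀ c, ((w.length + (i + 1) : ℕ) : ℤ) * S.Q < x c := fun c => by
      have := hxm c
      rw [List.length_cons] at this
      rwa [show w.length + (i + 1) = w.length + 1 + i by ring]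
    obtain ⟨-, -, h3⟩ := cut_aux hx hw.1.1 (i + 1) w.length hxm' hw.1.2.2
    have haY : ∀ c, a c + (i + 1 : ℕ) * S.Q ≤ Y c := fun c => by
      have h4 := hw.1.2.1 c
      have h5 := hu c
      push_cast
      linarith
    have h6 := ih (i + 1) hw.2 hxm' haY
    rw [cut, WS_cons, WS_cons, mul_add, mul_add]
    set g : ℕ → ZMod f → ℕ := fun i c => if x c < Y c then S.cn x c - i * (p - 1) else 0 with hg
    have h7 : S.W (S.clos (fun c => min (a c) (x c - (i + 1 : ℕ) * S.Q))) ≤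
        S.W a + S.E.Phi (g (i + 1)) := by
      unfold W Items.Phi
      rw [← sum_add_distrib]
      refine sum_le_sum fun c _ => ?_
      rcases h3 c with h8 | ⟨h8, h9⟩
      · exact (S.E.phi_mono c h8).trans (Nat.le_add_right _ _)
      · have h10 : x c < Y c := by have := haY c; linarith
        simp only [hg, h10, if_true]
        exact (S.E.phi_mono c h9).trans (Nat.le_add_left _ _)
    have h8 : p ^ f * S.E.Phi (g (i + 1)) ≤ S.E.Phi (g i) := by
      unfold Items.Phi
      rw [mul_sum]
      refine sum_le_sum fun c _ => ?_
      have h9 : g (i + 1) c = g i c - (p - 1) := by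
        simp only [hg]
        split_ifs
        · rw [add_mul, one_mul, Nat.sub_sub]
        · simp
      rw [h9]
      exact S.E.phi_shift S.two_le c _
    obtain ⟨r, hr⟩ : ∃ r, p ^ f = r + 1 := ⟨p ^ f - 1, by
      have := Nat.one_le_pow f p (by have := S.two_le; omega); omega⟩
    rw [hr, Nat.add_sub_cancel] at h6 ⊢
    rw [hr] at h8
    have h9 := Nat.mul_le_mul_left r h7
    change _ ≤ _ + S.E.Phi (g (i + 1)) at h6
    change _ ≤ _ + S.E.Phi (g i)
    nlinarith

/-- Exchange: a chain starting at some `Y` above the minimizer `x` is beaten by one starting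
at `x`. -/
lemma IsMin.exchange {X x Y : ZMod f → ℤ} {w : List (ZMod f → ℤ)} (hx : S.IsMin w.length X x)
    (hY : S.Box w.length X Y) (hxY : ∀ c, x c ≤ Y c) (hne : x ≠ Y) (hw : S.RC Y w) :
    ∃ z, z.length = w.length ∧ S.RC x z ∧ S.W x + S.WS z < S.W Y + S.WS w := by
  have hp := S.two_le
  have hlt : S.W x < S.W Y :=
    lt_of_le_of_ne (hx.2 _ hY) fun h => hne (hx.1.1.W_inj hY.1 h)
  have hQ := S.Q_pos
  have hxm : ∀ c, ((w.length + 0 : ℕ) : ℤ) * S.Q < x c := hx.1.2.2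
  have hx0 : ∀ c, 0 < x c := fun c => lt_of_le_of_lt (by positivity) (hx.1.2.2 c)
  refine ⟨S.cut x 0 w, length_cut _ _ _, ?_, ?_⟩
  · refine (cut_RC hx.1.1 0 w hw hxm).mono fun c => ?_
    have h1 : (fun c => min (Y c) (x c - (0 : ℕ) * S.Q)) = x := by
      ext c; simp [hxY c]
    rw [h1]
    exact clos_le hx0 c
  · obtain ⟨N, t, ht, hdiff, hcnt, hgap⟩ := S.E.compare hp hlt
    have h1 := cut_WS (Y := Y) hx.1.1 0 w hw hxm (fun c => by simp)
    set g : ZMod f → ℕ := fun c => if x c < Y c then S.cn x c - 0 * (p - 1) else 0 with hg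
    have hgx : ∀ c, g c ≤ S.cn x c := fun c => by simp only [hg]; split_ifs <;> omega
    have hgt : ∀ c, ∀ i < g c, S.E.e c i < N + 1 := by
      intro c i hi
      by_contra hcon
      have h2 := (ht c i).mp (by omega)
      by_cases hc : x c < Y c
      · have h3 := hx.count_le hY hxY ht hdiff hc
        have h4 := hgx c
        omega
      · simp [hg, hc] at hi
    have h2 := S.E.Phi_eq_sum_cnt g (N + 1) hgt
    rw [sum_range_succ] at h2
    have h3 := digit_sum_lt hp (S.E.cnt g) N (fun j _ => S.E.cnt_le g j)
    have h4 : S.E.cnt g N ≤ S.E.cnt (S.cn x) N := S.E.cnt_mono (hgx _)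
    have h5 := S.E.cnt_le (S.cn Y) N
    have h6 : (S.E.cnt g N + 1) * p ^ N ≤ (p - 1) * p ^ N := Nat.mul_le_mul_right _ (by omega)
    rw [add_mul, one_mul] at h6
    have h7 : S.E.Phi g < (p - 1) * p ^ N := by omega
    change (p ^ f - 1) * S.W x + _ ≤ (p ^ f - 1) * S.W Y at hgap
    refine lt_of_mul_lt_mul_left (a := p ^ f - 1) ?_ (Nat.zero_le _)
    rw [mul_add, mul_add]
    omega

/-- Consecutive minimizers have nested counts. -/
lemma IsMin.nested {b : ℕ} {X x x' : ZMod f → ℤ} (hx : S.IsMin (b + 1) X x)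
    (hx' : S.IsMin b x x') (c : ZMod f) : S.cn x' c ≤ S.cn x c := by
  have hQ := S.Q_pos
  have hp : (2 : ℤ) ≤ p := by exact_mod_cast S.two_le
  have hVx := hx.1.1
  have hVx' := hx'.1.1
  -- `s` is as small as possible above `x'` with counts at most those of `x`
  let T : Set (ZMod f → ℤ) := {s | (∀ c, x' c ≤ s c) ∧ (∀ c, s c + S.Q ≤ x c) ∧
    (∀ c, S.Q ∣ s c - S.B c) ∧ ∀ c, S.df s c ≤ S.df x c}
  have hT : T.Nonempty := by
    refine ⟨fun c => x c - S.Q, fun c => ?_, fun c => ?_, fun c => ?_, fun c => ?_⟩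
    · have := hx'.1.2.1 c; simp only; linarith
    · simp
    · have := dvd_sub (hVx.1 c) (dvd_refl S.Q)
      rwa [sub_right_comm] at this
    · rw [df_sub_const]; nlinarith
  obtain ⟨s, ⟨hs1, hs2, hs3, hs4⟩, hmin⟩ :=
    (measure fun s : ZMod f → ℤ => (∑ c, (s c - x' c)).toNat).wf.has_min T hT
  have hraised : ∀ r, x' r < s r → S.df s r = S.df x r := by
    intro r hr
    refine le_antisymm (hs4 r) ?_
    by_contra hcon
    push Not at hcon
    have hd : S.df s r + S.Q ≤ S.df x r := by
      have h1 := dvd_sub (dvd_df hVx.1 r) (dvd_df hs3 r)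
      have := Int.le_of_dvd (by linarith) h1
      linarith
    have hrQ := add_Q_le hVx'.1 hs3 hr
    have hdel : ∀ c, Function.update s r (s r - S.Q) c = s c - if c = r then S.Q else 0 := by
      intro c
      by_cases h : c = r
      · subst h; simp
      · simp [h]
    refine hmin (Function.update s r (s r - S.Q)) ⟨fun c => ?_, fun c => ?_, fun c => ?_,
      fun c => ?_⟩ ?_
    · rw [hdel]; split_ifs with h
      · subst h; linarith
      · simpa using hs1 c
    · rw [hdel]; have := hs2 c; split_ifs <;> linarith
    · rw [hdel]; split_ifs with h
      · have := dvd_sub (hs3 c) (dvd_refl S.Q)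
        rwa [sub_right_comm] at this
      · simpa using hs3 c
    · have h1 : S.df (Function.update s r (s r - S.Q)) c =
          S.df s c - p * (if c + 1 = r then S.Q else 0) + if c = r then S.Q else 0 := by
        unfold df; rw [hdel, hdel]; ring
      rw [h1]
      have h2 : 0 ≤ (p : ℤ) * (if c + 1 = r then S.Q else 0) := by
        split_ifs <;> positivity
      by_cases h : c = r
      · subst h; simp only [if_true]; linarith
      · simp only [h, if_false]; have := hs4 c; linarith
    · change (∑ c, (Function.update s r (s r - S.Q) c - x' c)).toNat < (∑ c, (s c - x' c)).toNat
      have h1 : ∑ c, (Function.update s r (s r - S.Q) c - x' c) = ∑ c, (s c - x' c) - S.Q := by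
        rw [sum_congr rfl (fun c _ => by rw [hdel c, sub_right_comm]), sum_sub_distrib]
        simp
      rw [h1]
      have h2 : s r - x' r ≤ ∑ c, (s c - x' c) :=
        single_le_sum (f := fun c => s c - x' c) (fun c _ => sub_nonneg.mpr (hs1 c))
          (mem_univ r)
      omega
  have hnr : ∀ r, x' r = s r → S.df x' r ≤ S.df s r := by
    intro r hr
    unfold df
    have := mul_le_mul_of_nonneg_left (hs1 (r + 1)) (by positivity : (0 : ℤ) ≤ p)
    linarith
  have hcase : ∀ r, S.df s r = S.df x r ∨ S.df x' r ≤ S.df s r := fun r =>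
    (hs1 r).lt_or_eq.elim (fun h => Or.inl (hraised r h)) (fun h => Or.inr (hnr r h))
  have hVs : S.V s := ⟨hs3, fun r => ⟨by
    have h1 := (hVx.2 r).1
    have h2 := (hVx'.2 r).1
    rcases hcase r with h | h <;> linarith, (hs4 r).trans (hVx.2 r).2⟩⟩
  have hsbox : S.Box b x s := ⟨hVs, hs2, fun c => lt_of_lt_of_le (hx'.1.2.2 c) (hs1 c)⟩
  set u : ZMod f → ℤ := fun c => x c - (s c - x' c) with hu
  have hdu : ∀ c, S.df u c = S.df x c - (S.df s c - S.df x' c) := fun c => by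
    simp only [hu]; unfold df; ring
  have hVu : S.V u := by
    refine ⟨fun c => ?_, fun c => ?_⟩
    · have := dvd_sub (hVx.1 c) (dvd_sub (hs3 c) (hVx'.1 c))
      simp only [hu]
      rwa [sub_sub_sub_cancel_right, sub_right_comm] at this
    · rw [hdu]
      have h1 := hs4 c
      have h2 := hVx.2 c
      have h3 := hVx'.2 c
      rcases hcase c with h | h <;> constructor <;> linarith
  have hubox : S.Box (b + 1) X u := by
    refine ⟨hVu, fun c => ?_, fun c => ?_⟩
    · have h1 := hs1 c
      have h2 := hx.1.2.1 c
      simp only [hu]; linarith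
    · have h1 := hs2 c
      have h2 := hx'.1.2.2 c
      simp only [hu]; push_cast; linarith
  have hW : S.W u + S.W s ≤ S.W x + S.W x' := by
    refine V.W_convex hVu hVs hVx hVx' (fun c => by rw [hdu]; ring) (fun c => ?_)
      (fun c => le_max_of_le_left (hs4 c))
    rw [hdu]
    rcases hcase c with h | h
    · exact le_max_of_le_right (by linarith)
    · exact le_max_of_le_left (by linarith)
  have h1 := hx.2 u hubox
  have h2 := hx'.2 s hsbox
  have h3 : x' = s := hVx'.W_inj hVs (by omega)
  rw [hVx'.cn_le_iff hVx, h3]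
  exact hs4 c

/-- The greedy chain, which takes the minimizer at every step, is the unique relaxed chain of its
length of least total weight, and its counts are nested. -/
theorem greedy (d : ℕ) : ∀ X : ZMod f → ℤ, S.V X → (∀ c, d * S.Q < X c) →
    ∃ L : List (ZMod f → ℤ), L.length = d ∧ S.RC X L ∧
      (∀ a M, L = a :: M → S.IsMin M.length X a) ∧ S.Nested S.cap L ∧
      ∀ L', L'.length = d → S.RC X L' → S.WS L ≤ S.WS L' ∧ (S.WS L' = S.WS L → L' = L) := by
  induction d with
  | zero =>
    intro X _ _
    refine ⟨[], rfl, trivial, fun a M h => by simp at h, trivial, fun L' hL' _ => ?_⟩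
    rw [List.length_eq_zero_iff.mp hL']
    simp
  | succ d ih =>
    intro X hX hXd
    obtain ⟨x, hx⟩ := exists_isMin (b := d) hX (fun c => by exact_mod_cast hXd c)
    obtain ⟨L, hLl, hLRC, hLhead, hLnest, hLmin⟩ := ih x hx.1.1 hx.1.2.2
    refine ⟨x :: L, by simp [hLl], ⟨by rw [hLl]; exact hx.1, hLRC⟩, ?_, ⟨hx.1.1.cn_le_cap, ?_⟩, ?_⟩
    · rintro a M h
      obtain ⟨rfl, rfl⟩ := List.cons.inj h
      rw [hLl]; exact hx
    · cases L with
      | nil => trivial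
      | cons x' M =>
        refine ⟨fun c => ?_, hLnest.2⟩
        have h1 := hLhead x' M rfl
        rw [List.length_cons] at hLl
        rw [← hLl] at hx
        exact hx.nested h1 c
    · intro L' hL' hRC
      cases L' with
      | nil => simp at hL'
      | cons y M =>
        have hM : M.length = d := by simpa using hL'
        obtain ⟨hy, hyM⟩ := hRC
        rw [hM] at hy
        rw [WS_cons, WS_cons]
        have hsub := hy.1.W_min_add_max hx.1.1
        set m : ZMod f → ℤ := fun c => max (y c) (x c) with hm
        have hminbox : S.Box d X (fun c => min (y c) (x c)) :=
          ⟨hy.1.min hx.1.1, fun c => by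
            have := hy.2.1 c; have := min_le_left (y c) (x c); simp only; linarith,
            fun c => lt_min (hy.2.2 c) (hx.1.2.2 c)⟩
        have hmbox : S.Box d X m :=
          ⟨hy.1.max hx.1.1, fun c => by
            have h1 := hy.2.1 c; have h2 := hx.1.2.1 c; simp only [hm]; omega,
            fun c => lt_max_of_lt_left (hy.2.2 c)⟩
        have hmW : S.W m ≤ S.W y := by
          have := hx.2 _ hminbox
          omega
        have hRCm : S.RC m M := hyM.mono fun c => le_max_left _ _
        by_cases hmx : x = m
        · rw [← hmx] at hRCm
          obtain ⟨h1, h2⟩ := hLmin M hM hRCm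
          have h3 := hx.2 y hy
          refine ⟨by omega, fun h => ?_⟩
          rw [h2 (by omega), hx.1.1.W_inj hy.1 (by omega)]
        · have hx2 : S.IsMin M.length X x := by rwa [hM]
          obtain ⟨z, hz1, hz2, hz3⟩ := hx2.exchange (by rwa [hM]) (fun c => le_max_right _ _) hmx
            hRCm
          change S.W x + S.WS z < S.W m + S.WS M at hz3
          obtain ⟨h1, -⟩ := hLmin z (by rw [hz1, hM]) hz2
          exact ⟨by omega, fun h => by omega⟩

end Sys

end MZVal

/-! ### Chains of digitwise dominated numbers -/

namespace MZVal

open Finset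

set_option linter.unusedSectionVars false

/-- The `j`-th base-`p` digit of `m`. -/
def dig (p m j : ℕ) : ℕ := m / p ^ j % p

/-- Digitwise domination `j ⪯ k` in base `p`. -/
def Dom (p j k : ℕ) : Prop := ∀ i, dig p j i ≤ dig p k i

/-- Descending chains `k > j_1 > j_2 > ⋯ > 0` in which every term is digitwise dominated by and
congruent modulo `p ^ f - 1` to the preceding one. -/
def TCh (p f : ℕ) : ℕ → List ℕ → Prop
  | _, [] => True
  | k, j :: L => (0 < j ∧ j < k ∧ Dom p j k ∧ ((p : ℤ) ^ f - 1) ∣ (k : ℤ) - j) ∧ TCh p f j L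

variable {p f : ℕ} [NeZero f]

lemma dig_le (hp : 2 ≤ p) (m j : ℕ) : dig p m j ≤ p - 1 := by
  have := Nat.mod_lt (m / p ^ j) (show 0 < p by omega)
  unfold dig
  omega

lemma dig_zero (j : ℕ) : dig p 0 j = 0 := by simp [dig]

lemma sum_dig (M : ℕ) {m : ℕ} (hm : m < p ^ M) : ∑ j ∈ range M, dig p m j * p ^ j = m := by
  have h : ∀ M, ∑ j ∈ range M, dig p m j * p ^ j = m % p ^ M := by
    intro M
    induction M with
    | zero => simp [Nat.mod_one]
    | succ M ih => rw [sum_range_succ, ih, Nat.mod_pow_succ, dig, mul_comm (p ^ M)]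
  rw [h, Nat.mod_eq_of_lt hm]

lemma dig_eq_zero {m M j : ℕ} (hp : 2 ≤ p) (hm : m < p ^ M) (hj : M ≤ j) : dig p m j = 0 := by
  have : m / p ^ j = 0 :=
    Nat.div_eq_of_lt (hm.trans_le (Nat.pow_le_pow_right (by omega) hj))
  simp [dig, this]

lemma dig_of_sum (hp : 2 ≤ p) (M : ℕ) (a : ℕ → ℕ) (ha : ∀ j < M, a j ≤ p - 1) {j : ℕ}
    (hj : j < M) : dig p (∑ j ∈ range M, a j * p ^ j) j = a j :=
  digit_inj hp _ _ M (fun j _ => dig_le hp _ j) ha (sum_dig M (digit_sum_lt hp a M ha)) j hj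

lemma Dom.trans {i j k : ℕ} (h : Dom p i j) (h' : Dom p j k) : Dom p i k :=
  fun l => (h l).trans (h' l)

lemma Dom.refl (k : ℕ) : Dom p k k := fun _ => le_rfl

lemma Dom.le (hp : 2 ≤ p) {j k : ℕ} (h : Dom p j k) : j ≤ k := by
  have hb : ∀ m, m ≤ max j k → m < p ^ max j k := fun m hm =>
    lt_of_le_of_lt hm (Nat.lt_pow_self (by omega))
  calc j = ∑ i ∈ range (max j k), dig p j i * p ^ i := (sum_dig _ (hb j (le_max_left _ _))).symm
    _ ≤ ∑ i ∈ range (max j k), dig p k i * p ^ i :=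
      sum_le_sum fun i _ => Nat.mul_le_mul_right _ (h i)
    _ = k := sum_dig _ (hb k (le_max_right _ _))

/-- The number of base-`p` digits of `m` (counted with their values) at positions `≡ c`. -/
def nv (p f M m : ℕ) (c : ZMod f) : ℕ :=
  ∑ j ∈ range M, if (j : ZMod f) = c then dig p m j else 0

/-- The sum of the base-`p` digits of `m`, that at position `j` being weighted by
`p ^ ((j - c) mod f)`. -/
def Av (p f M m : ℕ) (c : ZMod f) : ℤ :=
  ∑ j ∈ range M, (dig p m j : ℤ) * (p : ℤ) ^ ((j : ZMod f) - c).val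

lemma val_pred {x : ZMod f} (hx : x ≠ 0) : x.val = (x - 1).val + 1 := by
  have h1 : x.val ≠ 0 := fun h => hx ((ZMod.val_eq_zero x).mp h)
  have h2 := ZMod.val_lt x
  have h3 : x - 1 = ((x.val - 1 : ℕ) : ZMod f) := by
    rw [Nat.cast_sub (by omega), ZMod.natCast_zmod_val, Nat.cast_one]
  rw [h3, ZMod.val_natCast_of_lt (by omega)]
  omega

lemma val_neg_one' : ((-1 : ZMod f)).val = f - 1 := by
  have h := NeZero.pos f
  have h3 : (-1 : ZMod f) = ((f - 1 : ℕ) : ZMod f) := by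
    rw [Nat.cast_sub (by omega), ZMod.natCast_self, Nat.cast_one, zero_sub]
  rw [h3, ZMod.val_natCast_of_lt (by omega)]

lemma Av_diff (M m : ℕ) (c : ZMod f) :
    (p : ℤ) * Av p f M m (c + 1) - Av p f M m c = ((p : ℤ) ^ f - 1) * nv p f M m c := by
  unfold Av nv
  push_cast
  rw [mul_sum, mul_sum, ← sum_sub_distrib]
  refine sum_congr rfl fun j _ => ?_
  rw [← sub_sub]
  by_cases h : (j : ZMod f) = c
  · rw [if_pos h, h, sub_self, zero_sub, val_neg_one', ZMod.val_zero]
    have : (p : ℤ) ^ f = p ^ (f - 1) * p := by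
      rw [← pow_succ, Nat.sub_add_cancel (NeZero.pos f)]
    rw [this]; ring
  · rw [if_neg h, val_pred (sub_ne_zero.mpr h)]
    ring

lemma pow_congr {a b : ℕ} (h : (a : ZMod f) = b) : ((p : ℤ) ^ f - 1) ∣ (p : ℤ) ^ a - p ^ b := by
  have h1 : ∀ a : ℕ, ((p : ℤ) ^ f - 1) ∣ (p : ℤ) ^ a - p ^ (a % f) := by
    intro a
    have h2 : (p : ℤ) ^ a = p ^ (a % f) * (p ^ f) ^ (a / f) := by
      rw [← pow_mul, ← pow_add, Nat.mod_add_div]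
    rw [h2]
    have h3 : (p : ℤ) ^ (a % f) * (p ^ f) ^ (a / f) - p ^ (a % f) =
      p ^ (a % f) * ((p ^ f) ^ (a / f) - 1) := by ring
    rw [h3]
    exact Dvd.dvd.mul_left (by simpa using sub_dvd_pow_sub_pow ((p : ℤ) ^ f) 1 (a / f)) _
  have h4 := (ZMod.natCast_eq_natCast_iff' a b f).mp h
  have h5 := dvd_sub (h1 a) (h1 b)
  rwa [h4, sub_sub_sub_cancel_right] at h5

/-- Modulo `p ^ f - 1`, the weighted digit sum is a unit multiple of the number itself. -/
lemma Av_congr {M m : ℕ} (hm : m < p ^ M) (c : ZMod f) :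
    ((p : ℤ) ^ f - 1) ∣ Av p f M m c - (p : ℤ) ^ (-c).val * m := by
  have h1 : (m : ℤ) = ∑ j ∈ range M, (dig p m j : ℤ) * (p : ℤ) ^ j := by
    conv_lhs => rw [← sum_dig M hm]
    push_cast
    rfl
  conv => enter [2, 2, 2]; rw [h1]
  unfold Av
  rw [mul_sum, ← sum_sub_distrib]
  refine Finset.dvd_sum fun j _ => ?_
  have h2 : (dig p m j : ℤ) * (p : ℤ) ^ ((j : ZMod f) - c).val -
      p ^ (-c).val * (dig p m j * p ^ j) =
      dig p m j * (p ^ ((j : ZMod f) - c).val - p ^ ((-c).val + j)) := by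
    rw [pow_add]; ring
  rw [h2]
  refine Dvd.dvd.mul_left (pow_congr ?_) _
  rw [ZMod.natCast_zmod_val]
  push_cast
  rw [ZMod.natCast_zmod_val]
  ring

lemma Av_sub_dvd {M j k : ℕ} (hj : j < p ^ M) (hk : k < p ^ M)
    (h : ((p : ℤ) ^ f - 1) ∣ (k : ℤ) - j) (c : ZMod f) :
    ((p : ℤ) ^ f - 1) ∣ Av p f M k c - Av p f M j c := by
  have h1 := dvd_add (dvd_sub (Av_congr hk c) (Av_congr hj c)) (Dvd.dvd.mul_left h (p ^ (-c).val))
  have h2 : Av p f M k c - p ^ (-c).val * k - (Av p f M j c - p ^ (-c).val * j) +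
    p ^ (-c).val * (k - j) = Av p f M k c - Av p f M j c := by ring
  rwa [h2] at h1

lemma sub_dvd_of_Av {M j k : ℕ} (hj : j < p ^ M) (hk : k < p ^ M)
    (h : ((p : ℤ) ^ f - 1) ∣ Av p f M k 0 - Av p f M j 0) :
    ((p : ℤ) ^ f - 1) ∣ (k : ℤ) - j := by
  have h1 := dvd_sub h (dvd_sub (Av_congr (f := f) hk 0) (Av_congr (f := f) hj 0))
  rw [neg_zero, ZMod.val_zero] at h1
  have h2 : Av p f M k 0 - Av p f M j 0 - (Av p f M k 0 - p ^ 0 * k - (Av p f M j 0 - p ^ 0 * j))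
    = k - j := by ring
  rwa [h2] at h1

lemma Av_le (hp : 2 ≤ p) (M : ℕ) {j k : ℕ} (h : Dom p j k) (c : ZMod f) :
    Av p f M j c ≤ Av p f M k c :=
  sum_le_sum fun i _ => mul_le_mul_of_nonneg_right (by exact_mod_cast h i) (by positivity)

lemma Av_lt (hp : 2 ≤ p) {M j k : ℕ} (hk : k < p ^ M) (h : Dom p j k) (hlt : j < k)
    (c : ZMod f) : Av p f M j c < Av p f M k c := by
  refine lt_of_le_of_ne (Av_le hp M h c) fun heq => ?_
  have h1 := (sum_eq_sum_iff_of_le (s := range M) fun i _ =>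
    mul_le_mul_of_nonneg_right (show (dig p j i : ℤ) ≤ dig p k i by exact_mod_cast h i)
      (by positivity : (0 : ℤ) ≤ p ^ ((i : ZMod f) - c).val)).mp heq
  have h2 : j = k := by
    rw [← sum_dig M (hlt.trans hk), ← sum_dig M hk]
    refine sum_congr rfl fun i hi => ?_
    have h3 : (p : ℤ) ^ ((i : ZMod f) - c).val ≠ 0 := by positivity
    have h4 := mul_right_cancel₀ h3 (h1 i hi)
    rw [show dig p j i = dig p k i by exact_mod_cast h4]
  omega

lemma Av_zero (M : ℕ) (c : ZMod f) : Av p f M 0 c = 0 := by simp [Av, dig_zero]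

lemma Av_pos (hp : 2 ≤ p) {M k : ℕ} (hk : k < p ^ M) (h0 : 0 < k) (c : ZMod f) :
    0 < Av p f M k c := by
  rw [← Av_zero (p := p) M c]
  exact Av_lt hp hk (fun i => by simp [dig_zero]) h0 c

lemma Qpos (hp : 2 ≤ p) : (0 : ℤ) < (p : ℤ) ^ f - 1 := by
  have h : p ^ 1 ≤ p ^ f := Nat.pow_le_pow_right (by omega) (NeZero.pos f)
  have h2 : 2 ≤ p ^ f := by rw [pow_one] at h; omega
  have : (2 : ℤ) ≤ (p : ℤ) ^ f := by exact_mod_cast h2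
  linarith

lemma Av_add_le (hp : 2 ≤ p) {M j k : ℕ} (hk : k < p ^ M) (h : Dom p j k) (hlt : j < k)
    (hd : ((p : ℤ) ^ f - 1) ∣ (k : ℤ) - j) (c : ZMod f) :
    Av p f M j c + ((p : ℤ) ^ f - 1) ≤ Av p f M k c := by
  have h1 := Av_lt hp hk h hlt c
  have := Int.le_of_dvd (by linarith) (Av_sub_dvd (hlt.trans hk) hk hd c)
  linarith

/-- A chain below `k` forces all weighted digit sums of `k` to be large. -/
lemma TCh.length_lt (hp : 2 ≤ p) {M k : ℕ} {L : List ℕ} (hk : k < p ^ M) (h0 : 0 < k)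
    (h : TCh p f k L) (c : ZMod f) : (L.length : ℤ) * ((p : ℤ) ^ f - 1) < Av p f M k c := by
  induction L generalizing k with
  | nil => simpa using Av_pos hp hk h0 c
  | cons j L ih =>
    obtain ⟨⟨h1, h2, h3, h4⟩, h5⟩ := h
    have h6 := ih (h2.trans hk) h1 h5
    have h7 := Av_add_le hp hk h3 h2 h4 c
    push_cast [List.length_cons]
    linarith

/-! ### The item list of a number -/

/-- The base-`p` digits of `K` below position `M`, continued by `p - 1`. -/
def extDig (p M K j : ℕ) : ℕ := if j < M then dig p K j else p - 1

/-- The number of items of type `c` below position `m`. -/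
def cum (p f M K : ℕ) (c : ZMod f) (m : ℕ) : ℕ :=
  ∑ j ∈ range m, if (j : ZMod f) = c then extDig p M K j else 0

lemma extDig_le (hp : 2 ≤ p) (M K j : ℕ) : extDig p M K j ≤ p - 1 := by
  unfold extDig
  split_ifs
  · exact dig_le hp K j
  · exact le_rfl

lemma cum_mono (M K : ℕ) (c : ZMod f) : Monotone (cum p f M K c) := fun _ _ h =>
  sum_le_sum_of_subset (range_mono h)

lemma cum_succ (M K : ℕ) (c : ZMod f) (m : ℕ) : cum p f M K c (m + 1) =
    cum p f M K c m + if (m : ZMod f) = c then extDig p M K m else 0 := sum_range_succ _ _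

lemma exists_lt_cum (hp : 2 ≤ p) (M K : ℕ) (c : ZMod f) (i : ℕ) :
    ∃ m, i < cum p f M K c (m + 1) := by
  have step : ∀ m, ∃ m', cum p f M K c m < cum p f M K c (m' + 1) := by
    intro m
    refine ⟨c.val + f * (m + M), ?_⟩
    have hf := NeZero.pos f
    have h1 : m + M ≤ f * (m + M) := Nat.le_mul_of_pos_left _ hf
    have h2 : ((c.val + f * (m + M) : ℕ) : ZMod f) = c := by
      push_cast
      rw [ZMod.natCast_zmod_val, ZMod.natCast_self, zero_mul, add_zero]
    have h3 := cum_mono (p := p) M K c (show m ≤ c.val + f * (m + M) by omega)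
    rw [cum_succ, if_pos h2, extDig, if_neg (by omega)]
    omega
  induction i with
  | zero =>
    obtain ⟨m, hm⟩ := step 0
    exact ⟨m, by omega⟩
  | succ i ih =>
    obtain ⟨m, hm⟩ := ih
    obtain ⟨m', hm'⟩ := step (m + 1)
    exact ⟨m', by omega⟩

/-- The position of the `i`-th item of type `c`. -/
noncomputable def epos (hp : 2 ≤ p) (M K : ℕ) (c : ZMod f) (i : ℕ) : ℕ :=
  Nat.find (exists_lt_cum hp M K c i)

lemma epos_le_iff (hp : 2 ≤ p) (M K : ℕ) (c : ZMod f) (i m : ℕ) :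
    epos hp M K c i ≤ m ↔ i < cum p f M K c (m + 1) := by
  unfold epos
  rw [Nat.find_le_iff]
  constructor
  · rintro ⟨m', hm', h⟩
    exact h.trans_le (cum_mono M K c (by omega))
  · exact fun h => ⟨m, le_rfl, h⟩

lemma cum_epos_le (hp : 2 ≤ p) (M K : ℕ) (c : ZMod f) (i : ℕ) :
    cum p f M K c (epos hp M K c i) ≤ i := by
  by_contra h
  push Not at h
  rcases hm : epos hp M K c i with _ | m
  · rw [hm] at h; simp [cum] at h
  · rw [hm] at h
    have := (epos_le_iff hp M K c i m).mpr h
    omega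

lemma epos_typ (hp : 2 ≤ p) (M K : ℕ) (c : ZMod f) (i : ℕ) :
    ((epos hp M K c i : ℕ) : ZMod f) = c := by
  by_contra h
  have h1 := cum_epos_le hp M K c i
  have h2 := (epos_le_iff hp M K c i _).mp le_rfl
  rw [cum_succ, if_neg h] at h2
  omega

/-- The base-`p` digits of `K`, viewed as an item list. -/
noncomputable def itemsOf (f : ℕ) [NeZero f] (hp : 2 ≤ p) (M K : ℕ) : Items p f where
  e := epos hp M K
  mono := fun c i i' h => (epos_le_iff hp M K c i _).mpr
    (lt_of_le_of_lt h ((epos_le_iff hp M K c i' _).mp le_rfl))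
  typ := epos_typ hp M K
  gap := fun c i => by
    have hf := NeZero.pos f
    by_contra hcon
    set m := epos hp M K c i with hm
    have h1 : epos hp M K c (i + (p - 1)) ≤ m + f - 1 := by omega
    rw [epos_le_iff, Nat.sub_add_cancel (by omega)] at h1
    have h2 : ∀ g, g < f → cum p f M K c (m + (g + 1)) ≤ i + (p - 1) := by
      intro g
      induction g with
      | zero =>
        intro _
        have h3 := cum_epos_le hp M K c i
        have h4 := extDig_le hp M K m
        rw [zero_add, cum_succ]
        rw [← hm] at h3
        split_ifs <;> omega
      | succ g ih =>
        intro hg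
        have h3 := ih (by omega)
        rw [← add_assoc, cum_succ, if_neg]
        · exact h3
        · intro h4
          have h5 := epos_typ hp M K c i
          rw [← hm] at h5
          push_cast at h4
          rw [h5] at h4
          have h6 : ((g + 1 : ℕ) : ZMod f) = 0 := by
            push_cast; exact add_eq_left.mp h4
          rw [ZMod.natCast_eq_zero_iff] at h6
          exact absurd (Nat.le_of_dvd (by omega) h6) (by omega)
    have h3 := h2 (f - 1) (by omega)
    rw [Nat.sub_add_cancel hf] at h3
    omega

lemma cum_eq_nv (M K : ℕ) (c : ZMod f) : cum p f M K c M = nv p f M K c := by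
  refine sum_congr rfl fun j hj => ?_
  rw [extDig, if_pos (mem_range.mp hj)]

/-- The relaxed optimization problem attached to `K`. -/
noncomputable def sysOf (f : ℕ) [NeZero f] (hp : 2 ≤ p) (M K : ℕ) : Sys p f where
  E := itemsOf f hp M K
  Q := (p : ℤ) ^ f - 1
  B := Av p f M K
  cap := nv p f M K
  two_le := hp
  Q_pos := Qpos hp
  B_dvd := fun c => by rw [Av_diff]; exact dvd_mul_right _ _

variable (hp : 2 ≤ p) {M K : ℕ}

lemma df_Av (j : ℕ) (c : ZMod f) :
    (sysOf f hp M K).df (Av p f M j) c = ((p : ℤ) ^ f - 1) * nv p f M j c := Av_diff M j c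

lemma nv_le {j : ℕ} (hj : Dom p j K) (c : ZMod f) : nv p f M j c ≤ nv p f M K c :=
  sum_le_sum fun i _ => by split_ifs <;> [exact hj i; exact le_rfl]

lemma V_Av (hK : K < p ^ M) {j : ℕ} (hj : Dom p j K) (hd : ((p : ℤ) ^ f - 1) ∣ (K : ℤ) - j) :
    (sysOf f hp M K).V (Av p f M j) := by
  have hQ := Qpos (f := f) hp
  refine ⟨fun c => ?_, fun c => ?_⟩
  · rw [← dvd_neg, neg_sub]
    exact Av_sub_dvd ((hj.le hp).trans_lt hK) hK hd c
  · rw [df_Av]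
    refine ⟨by positivity, mul_le_mul_of_nonneg_left ?_ hQ.le⟩
    exact_mod_cast nv_le hj c

lemma cn_Av (j : ℕ) : (sysOf f hp M K).cn (Av p f M j) = nv p f M j := by
  ext c
  unfold Sys.cn
  rw [df_Av]
  change (((p : ℤ) ^ f - 1) * _ / ((p : ℤ) ^ f - 1)).toNat = _
  rw [Int.mul_ediv_cancel_left _ (Qpos hp).ne', Int.toNat_natCast]

/-- The items of a number dominated by `K` are at least as expensive as the smallest items of `K`
of the same types. -/
lemma W_Av_le {j : ℕ} (hK : K < p ^ M) (hj : Dom p j K) :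
    (sysOf f hp M K).W (Av p f M j) ≤ j := by
  unfold Sys.W
  rw [cn_Av]
  have h1 : ∀ c m, m ≤ M →
      (itemsOf f hp M K).phi c (∑ i ∈ range m, if (i : ZMod f) = c then dig p j i else 0) ≤
      ∑ i ∈ range m, if (i : ZMod f) = c then dig p j i * p ^ i else 0 := by
    intro c m
    induction m with
    | zero => intro _; simp [Items.phi]
    | succ m ih =>
      intro hm
      have h2 := ih (by omega)
      rw [sum_range_succ, sum_range_succ _ m]
      by_cases hc : (m : ZMod f) = c
      · rw [if_pos hc, if_pos hc]
        have h3 : (∑ i ∈ range m, if (i : ZMod f) = c then dig p j i else 0) + dig p j m ≤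
            cum p f M K c (m + 1) := by
          unfold cum
          rw [sum_range_succ, if_pos hc]
          refine add_le_add (sum_le_sum fun i hi => ?_) ?_
          · have : i < M := by have := mem_range.mp hi; omega
            rw [extDig, if_pos this]
            split_ifs <;> [exact hj i; exact le_rfl]
          · rw [extDig, if_pos (by omega)]; exact hj m
        set n := ∑ i ∈ range m, if (i : ZMod f) = c then dig p j i else 0
        have h4 : ∀ δ, n + δ ≤ cum p f M K c (m + 1) →
            (itemsOf f hp M K).phi c (n + δ) ≤ (itemsOf f hp M K).phi c n + δ * p ^ m := by
          intro δ
          induction δ with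
          | zero => intro _; simp
          | succ δ ihδ =>
            intro h
            have h5 := ihδ (by omega)
            rw [← add_assoc, Items.phi_succ, add_mul, one_mul]
            have h6 : p ^ ((itemsOf f hp M K).e c (n + δ)) ≤ p ^ m :=
              Nat.pow_le_pow_right (by omega) ((epos_le_iff hp M K c _ m).mpr (by omega))
            omega
        have := h4 _ h3
        omega
      · rw [if_neg hc, if_neg hc]
        simpa using h2
  calc (itemsOf f hp M K).Phi (nv p f M j)
      ≤ ∑ c : ZMod f, ∑ i ∈ range M, if (i : ZMod f) = c then dig p j i * p ^ i else 0 :=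
        sum_le_sum fun c _ => h1 c M le_rfl
    _ = ∑ i ∈ range M, dig p j i * p ^ i := by
        rw [sum_comm]
        exact sum_congr rfl fun i _ => by simp
    _ = j := sum_dig M ((hj.le hp).trans_lt hK)

lemma pos_lt {n : ZMod f → ℕ} (hn : ∀ c, n c ≤ nv p f M K c) (c : ZMod f) (i : ℕ)
    (hi : i < n c) : (itemsOf f hp M K).e c i < M := by
  have h1 := hn c
  rw [← cum_eq_nv] at h1
  rcases M with _ | M
  · simp [cum] at h1; omega
  · have := (epos_le_iff hp (M + 1) K c i M).mpr (by omega)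
    exact Nat.lt_succ_of_le this

lemma dig_Phi {n : ZMod f → ℕ} (hn : ∀ c, n c ≤ nv p f M K c) (j : ℕ) :
    dig p ((itemsOf f hp M K).Phi n) j = (itemsOf f hp M K).cnt n j := by
  have h1 := (itemsOf f hp M K).Phi_eq_sum_cnt n M (pos_lt hp hn)
  rcases lt_or_ge j M with h | h
  · rw [h1]
    exact dig_of_sum hp M _ (fun j _ => Items.cnt_le _ n j) h
  · rw [dig_eq_zero hp ((itemsOf f hp M K).Phi_lt hp n M (pos_lt hp hn)) h]
    symm
    unfold Items.cnt
    rw [filter_false_of_mem, card_empty]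
    intro i hi h2
    have := pos_lt hp hn _ i (mem_range.mp hi)
    omega

lemma dom_Phi {n n' : ZMod f → ℕ} (hn' : ∀ c, n' c ≤ nv p f M K c) (h : ∀ c, n c ≤ n' c) :
    Dom p ((itemsOf f hp M K).Phi n) ((itemsOf f hp M K).Phi n') := fun j => by
  rw [dig_Phi hp (fun c => (h c).trans (hn' c)), dig_Phi hp hn']
  exact Items.cnt_mono _ (h _)

lemma dom_Phi_self {n : ZMod f → ℕ} (hn : ∀ c, n c ≤ nv p f M K c) :
    Dom p ((itemsOf f hp M K).Phi n) K := fun j => by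
  have h1 := (itemsOf f hp M K).Phi_lt hp n M (pos_lt hp hn)
  rcases lt_or_ge j M with h | h
  · rw [dig_Phi hp hn]
    unfold Items.cnt
    have h2 : (range (n (j : ZMod f))).filter (fun i => (itemsOf f hp M K).e (j : ZMod f) i = j) ⊆
        Ico (cum p f M K (j : ZMod f) j) (cum p f M K (j : ZMod f) (j + 1)) := by
      intro i hi
      have h3 : epos hp M K (j : ZMod f) i = j := (mem_filter.mp hi).2
      rw [mem_Ico]
      refine ⟨?_, (epos_le_iff hp M K _ i j).mp h3.le⟩
      have := cum_epos_le hp M K (j : ZMod f) i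
      rwa [h3] at this
    have h4 := card_le_card h2
    rw [Nat.card_Ico, cum_succ, if_pos rfl, extDig, if_pos h, Nat.add_sub_cancel_left] at h4
    exact h4
  · rw [dig_eq_zero hp h1 h]; exact Nat.zero_le _

lemma nv_Phi {n : ZMod f → ℕ} (hn : ∀ c, n c ≤ nv p f M K c) :
    nv p f M ((itemsOf f hp M K).Phi n) = n := by
  ext c
  unfold nv
  have h1 : ∀ j ∈ range M, (if (j : ZMod f) = c then dig p ((itemsOf f hp M K).Phi n) j else 0) =
      ((range (n c)).filter (fun i => (itemsOf f hp M K).e c i = j)).card := by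
    intro j _
    split_ifs with h
    · rw [dig_Phi hp hn, Items.cnt, h]
    · symm
      rw [filter_false_of_mem, card_empty]
      intro i _ hi
      apply h
      rw [← hi]
      exact (itemsOf f hp M K).typ c i
  rw [sum_congr rfl h1, ← card_eq_sum_card_fiberwise]
  · simp
  · intro i hi
    simp only [coe_range, Set.mem_Iio] at hi ⊢
    exact pos_lt hp hn c i hi

lemma Av_Phi {x : ZMod f → ℤ} (hx : (sysOf f hp M K).V x) :
    Av p f M ((sysOf f hp M K).W x) = x := by
  refine Sys.df_inj (S := sysOf f hp M K) fun c => ?_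
  rw [df_Av, ← hx.cn_spec]
  unfold Sys.W
  change _ * ((nv p f M ((itemsOf f hp M K).Phi _) c : ℕ) : ℤ) = _
  rw [nv_Phi hp hx.cn_le_cap]
  rfl

lemma TCh.RC (hK : K < p ^ M) {k : ℕ} (hk : Dom p k K)
    (hkd : ((p : ℤ) ^ f - 1) ∣ (K : ℤ) - k) {L : List ℕ} (h : TCh p f k L) :
    (sysOf f hp M K).RC (Av p f M k) (L.map (Av p f M)) := by
  induction L generalizing k with
  | nil => trivial
  | cons j L ih =>
    obtain ⟨⟨h1, h2, h3, h4⟩, h5⟩ := h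
    have hjK := h3.trans hk
    have hjd : ((p : ℤ) ^ f - 1) ∣ (K : ℤ) - j := by
      have := dvd_add hkd h4
      rwa [sub_add_sub_cancel] at this
    refine ⟨⟨V_Av hp hK hjK hjd, ?_, ?_⟩, ih hjK hjd h5⟩
    · exact Av_add_le hp ((hk.le hp).trans_lt hK) h3 h2 h4
    · rw [List.length_map]
      exact TCh.length_lt hp ((hjK.le hp).trans_lt hK) h1 h5

/-- A relaxed chain with nested counts is realized by a chain of numbers, each being the sum of the
smallest items of `K` with the prescribed counts. -/
lemma TCh_of_nested (hK : K < p ^ M) {k : ℕ} (hk : Dom p k K)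
    (hkd : ((p : ℤ) ^ f - 1) ∣ (K : ℤ) - k) {n : ZMod f → ℕ} (hn : ∀ c, n c ≤ nv p f M K c)
    (hnk : ∀ n', (∀ c, n' c ≤ n c) → Dom p ((itemsOf f hp M K).Phi n') k)
    {L : List (ZMod f → ℤ)} (hL : (sysOf f hp M K).RC (Av p f M k) L)
    (hN : (sysOf f hp M K).Nested n L) : TCh p f k (L.map (sysOf f hp M K).W) := by
  induction L generalizing k n with
  | nil => trivial
  | cons x L ih =>
    obtain ⟨⟨hV, hle, hpos⟩, hRC⟩ := hL
    obtain ⟨hxn, hN'⟩ := hN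
    have hQ := Qpos (f := f) hp
    have hA := Av_Phi hp hV
    have hdom : Dom p ((sysOf f hp M K).W x) k := hnk _ hxn
    have hdomK := hdom.trans hk
    have hlt : (sysOf f hp M K).W x < k := by
      refine lt_of_le_of_ne (hdom.le hp) fun h => ?_
      have h1 := hle 0
      rw [← h, hA] at h1
      change x 0 + ((p : ℤ) ^ f - 1) ≤ x 0 at h1
      linarith
    have hkK := (hk.le hp).trans_lt hK
    have h0 : 0 < (sysOf f hp M K).W x := by
      rw [Nat.pos_iff_ne_zero]
      intro h
      have h1 := hpos 0
      have h2 : (0 : ℤ) ≤ (L.length : ℤ) * (sysOf f hp M K).Q := mul_nonneg (by positivity) hQ.le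
      rw [← hA, h, Av_zero] at h1
      linarith
    have hdK : ((p : ℤ) ^ f - 1) ∣ (K : ℤ) - (sysOf f hp M K).W x := by
      refine sub_dvd_of_Av (hlt.trans hkK) hK ?_
      rw [hA, ← dvd_neg, neg_sub]
      exact hV.1 0
    have hd : ((p : ℤ) ^ f - 1) ∣ (k : ℤ) - (sysOf f hp M K).W x := by
      have := dvd_sub hdK hkd
      rwa [sub_sub_sub_cancel_left] at this
    refine ⟨⟨h0, hlt, hdom, hd⟩, ih hdomK hdK hV.cn_le_cap (fun n' hn' => ?_) ?_ hN'⟩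
    · exact dom_Phi hp hV.cn_le_cap hn'
    · rw [hA]; exact hRC

lemma eq_of_WS {L : List ℕ} (g : ℕ → ℕ) (hg : ∀ j ∈ L, g j ≤ j) (h : L.sum ≤ (L.map g).sum) :
    L.map g = L := by
  induction L with
  | nil => rfl
  | cons a L ih =>
    simp only [List.sum_cons, List.map_cons] at h ⊢
    have h1 := hg a (by simp)
    have h2 : (L.map g).sum ≤ L.sum := by
      have : ∀ L : List ℕ, (∀ j ∈ L, g j ≤ j) → (L.map g).sum ≤ L.sum := by
        intro L
        induction L with
        | nil => simp
        | cons a L ih =>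
          intro h
          have h3 := ih (fun j hj => h j (by simp [hj]))
          have h4 := h a (by simp)
          simp only [List.sum_cons, List.map_cons]
          omega
      exact this L fun j hj => hg j (by simp [hj])
    rw [ih (fun j hj => hg j (by simp [hj])) (by omega), show g a = a by omega]

lemma TCh.dom {k : ℕ} {L : List ℕ} (h : TCh p f k L) : ∀ j ∈ L, Dom p j k := by
  induction L generalizing k with
  | nil => simp
  | cons a L ih =>
    intro j hj
    rcases List.mem_cons.mp hj with rfl | hj
    · exact h.1.2.2.1
    · exact (ih h.2 j hj).trans h.1.2.2.1

/-- If all weighted digit sums of `K` exceed `d (p ^ f - 1)`, then among the chains of length `d`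
below `K` there is a unique one of least sum. -/
theorem exists_min_chain (hp : 2 ≤ p) {M K : ℕ} (hK : K < p ^ M) (d : ℕ)
    (h : ∀ c : ZMod f, (d : ℤ) * ((p : ℤ) ^ f - 1) < Av p f M K c) :
    ∃ L : List ℕ, L.length = d ∧ TCh p f K L ∧ ∀ L', L'.length = d → TCh p f K L' →
      L.sum ≤ L'.sum ∧ (L'.sum = L.sum → L' = L) := by
  have hd0 : ((p : ℤ) ^ f - 1) ∣ (K : ℤ) - K := by simp
  obtain ⟨G, hGl, hGRC, -, hGN, hGmin⟩ := Sys.greedy (S := sysOf f hp M K) d (Av p f M K)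
    (V_Av hp hK (Dom.refl K) hd0) h
  refine ⟨G.map (sysOf f hp M K).W, by simp [hGl], ?_, fun L' hL' hT => ?_⟩
  · exact TCh_of_nested hp hK (Dom.refl K) hd0 (fun c => le_rfl)
      (fun n' hn' => dom_Phi_self hp hn') hGRC hGN
  · have hRC := TCh.RC hp hK (Dom.refl K) hd0 hT
    obtain ⟨h1, h2⟩ := hGmin _ (by simp [hL']) hRC
    have hle : ∀ j ∈ L', (sysOf f hp M K).W (Av p f M j) ≤ j := fun j hj =>
      W_Av_le hp hK (hT.dom j hj)
    have h3 : (sysOf f hp M K).WS (L'.map (Av p f M)) ≤ L'.sum := by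
      unfold Sys.WS
      rw [List.map_map]
      conv_rhs => rw [← List.map_id L']
      exact List.sum_le_sum fun j hj => hle j hj
    change (sysOf f hp M K).WS G ≤ _ ∧ (_ = (sysOf f hp M K).WS G → _)
    refine ⟨h1.trans h3, fun heq => ?_⟩
    have h4 := h2 (by omega)
    have h5 := eq_of_WS (fun j => (sysOf f hp M K).W (Av p f M j)) hle (by
      have h6 : (sysOf f hp M K).WS (L'.map (Av p f M)) =
        (L'.map fun j => (sysOf f hp M K).W (Av p f M j)).sum := by
        unfold Sys.WS; rw [List.map_map]; rfl
      rw [← h6, h4, heq])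
    rw [← h4, List.map_map]
    exact h5.symm

end MZVal

/-! ### Power sums and chains -/

namespace MZVal

open Finset

set_option linter.unusedSectionVars false

section algebra

variable {F : Type} [Field F] [Fintype F]

lemma sum_pow_eq (m : ℕ) : ∑ a : F, a ^ m =
    if 0 < m ∧ (Fintype.card F - 1) ∣ m then -1 else 0 := by
  rcases Nat.eq_zero_or_pos m with rfl | hm
  · simp
  · have h1 : ∑ a : F, a ^ m = ∑ x : Fˣ, (x : F) ^ m := by
      let φ : Fˣ ↪ F := ⟨fun x => x, Units.val_injective⟩
      have : univ.map φ = univ \ {0} := by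
        ext x
        simp only [mem_map, mem_univ, Function.Embedding.coeFn_mk, true_and, mem_sdiff,
          mem_singleton, φ]
        exact isUnit_iff_ne_zero
      calc ∑ a : F, a ^ m = ∑ x ∈ univ \ {(0 : F)}, x ^ m := by
            rw [← sum_sdiff ({0} : Finset F).subset_univ, sum_singleton, zero_pow hm.ne', add_zero]
        _ = ∑ x : Fˣ, (x : F) ^ m := by simp [φ, ← this]
    rw [h1]
    have h2 := FiniteField.sum_pow_units F m
    rw [h2]
    simp [hm]

lemma monicPoly_cons (d : ℕ) (x : F) (c : Fin d → F) :
    monicPoly F (d + 1) (Fin.cons x c : Fin (d + 1) → F) = X * monicPoly F d c + C x := by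
  unfold monicPoly
  rw [Fin.sum_univ_succ]
  simp only [Fin.cons_zero, Fin.cons_succ, Fin.val_zero, Fin.val_succ, pow_zero, mul_one]
  rw [mul_add, mul_sum, pow_succ']
  have : ∀ i : Fin d, C (c i) * X ^ ((i : ℕ) + 1) = X * (C (c i) * X ^ (i : ℕ)) := fun i => by
    ring
  simp only [this]
  ring

lemma powerSum_zero (k : ℕ) : powerSum F 0 k = 1 := by
  simp [powerSum, monicPoly]

lemma powerSum_succ (d k : ℕ) : powerSum F (d + 1) k =
    -∑ j ∈ range k, if (Fintype.card F - 1) ∣ (k - j) then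
      (k.choose j : F[X]) * (X ^ j * powerSum F d j) else 0 := by
  have h1 : powerSum F (d + 1) k =
      ∑ x : F, ∑ c : Fin d → F, (X * monicPoly F d c + C x) ^ k := by
    unfold powerSum
    rw [← (Fin.consEquiv (fun _ : Fin (d + 1) => F)).sum_comp, Fintype.sum_prod_type]
    refine sum_congr rfl fun x _ => sum_congr rfl fun c _ => ?_
    rw [← monicPoly_cons]
    rfl
  have h2 : ∀ j, ∑ x : F, ∑ c : Fin d → F,
      (X * monicPoly F d c) ^ j * C x ^ (k - j) * (k.choose j : F[X]) =
      (k.choose j : F[X]) * (X ^ j * powerSum F d j) * C (∑ x : F, x ^ (k - j)) := by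
    intro j
    rw [map_sum, mul_sum]
    refine sum_congr rfl fun x _ => ?_
    rw [powerSum, mul_sum, mul_sum, sum_mul]
    refine sum_congr rfl fun c _ => ?_
    rw [mul_pow, map_pow]
    ring
  rw [h1]
  simp only [add_pow]
  have h3 : ∑ x : F, ∑ c : Fin d → F, ∑ j ∈ range (k + 1),
      (X * monicPoly F d c) ^ j * C x ^ (k - j) * (k.choose j : F[X]) =
      ∑ j ∈ range (k + 1), ∑ x : F, ∑ c : Fin d → F,
      (X * monicPoly F d c) ^ j * C x ^ (k - j) * (k.choose j : F[X]) := by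
    rw [sum_comm]
    rw [sum_congr rfl fun x _ => sum_comm]
    rw [sum_comm]
    refine sum_congr rfl fun x _ => sum_comm
  rw [h3, sum_congr rfl fun j _ => h2 j, sum_range_succ, ← sum_neg_distrib]
  simp only [sum_pow_eq]
  rw [Nat.sub_self]
  simp only [lt_irrefl, false_and, if_false, map_zero, mul_zero, add_zero]
  refine sum_congr rfl fun j hj => ?_
  have : 0 < k - j := by have := mem_range.mp hj; omega
  simp only [this, true_and]
  split_ifs <;> simp

/-- The part of the power sum `S_d(-k)` coming from those terms of the iterated binomial
expansion all of whose exponents are positive. -/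
noncomputable def Tp (F : Type) [Field F] [Fintype F] : ℕ → ℕ → F[X]
  | 0, _ => 1
  | d + 1, k => -∑ j ∈ range k, if 0 < j ∧ (Fintype.card F - 1) ∣ (k - j) then
      (k.choose j : F[X]) * (X ^ j * Tp F d j) else 0

lemma Tp_succ (d k : ℕ) : Tp F (d + 1) k =
    -∑ j ∈ range k, if 0 < j ∧ (Fintype.card F - 1) ∣ (k - j) then
      (k.choose j : F[X]) * (X ^ j * Tp F d j) else 0 := rfl

lemma powerSum_succ_zero (d : ℕ) : powerSum F (d + 1) 0 = 0 := by
  simp [powerSum_succ]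

/-- The exponent `0` can only occur at the last step of the expansion, which produces the
correction term when `q - 1` divides `k`. -/
lemma powerSum_eq_Tp (d : ℕ) : ∀ k, 0 < k → powerSum F (d + 1) k =
    Tp F (d + 1) k - if (Fintype.card F - 1) ∣ k then Tp F d k else 0 := by
  -- peel off the term `j = 0` of the recursion
  have key : ∀ k, 0 < k → ∀ d, powerSum F (d + 1) k =
      -(∑ j ∈ range k, if 0 < j ∧ (Fintype.card F - 1) ∣ (k - j) then
      (k.choose j : F[X]) * (X ^ j * powerSum F d j) else 0) -
      if (Fintype.card F - 1) ∣ k then powerSum F d 0 else 0 := by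
    intro k hk d
    obtain ⟨k, rfl⟩ : ∃ k', k = k' + 1 := ⟨k - 1, by omega⟩
    rw [powerSum_succ, sum_range_succ', sum_range_succ']
    simp only [Nat.succ_pos, true_and, lt_irrefl, false_and, if_false, Nat.sub_zero,
      Nat.choose_zero_right, pow_zero, one_mul, Nat.cast_one, add_zero, neg_add]
    rw [sub_eq_add_neg]
  induction d with
  | zero =>
    intro k hk
    rw [key k hk, Tp_succ]
    simp only [powerSum_zero, Tp]
  | succ d ih =>
    intro k hk
    rw [key k hk, powerSum_succ_zero, ite_self, sub_zero, Tp_succ (d + 1)]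
    have : (if (Fintype.card F - 1) ∣ k then Tp F (d + 1) k else 0) =
        -∑ j ∈ range k, if 0 < j ∧ (Fintype.card F - 1) ∣ (k - j) then
        (k.choose j : F[X]) * (X ^ j * if (Fintype.card F - 1) ∣ j then Tp F d j else 0) else 0 := by
      split_ifs with hQ
      · rw [Tp_succ]
        congr 1
        refine sum_congr rfl fun j hj => ?_
        by_cases hj2 : (Fintype.card F - 1) ∣ (k - j)
        · have : (Fintype.card F - 1) ∣ j :=
            (Nat.dvd_sub_iff_right (mem_range.mp hj).le hQ).mp hj2
          simp [this]
        · simp [hj2]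
      · rw [sum_eq_zero, neg_zero]
        intro j hj
        by_cases hj2 : (Fintype.card F - 1) ∣ (k - j)
        · have : ¬ (Fintype.card F - 1) ∣ j := fun h => hQ (by
            have := dvd_add hj2 h
            rwa [Nat.sub_add_cancel (mem_range.mp hj).le] at this)
          simp [this]
        · simp [hj2]
    rw [this, sub_neg_eq_add, ← sub_eq_zero]
    rw [← sum_neg_distrib, ← sum_neg_distrib, ← sum_add_distrib, ← sum_sub_distrib]
    refine sum_eq_zero fun j _ => ?_
    by_cases hj : 0 < j ∧ (Fintype.card F - 1) ∣ (k - j)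
    · simp only [hj, and_self, if_true]
      rw [ih j hj.1]
      ring
    · simp [hj]

end algebra

section coefficients

variable {p f : ℕ} [NeZero f]

/-- Lucas' theorem in the form needed here. -/
lemma choose_ne_zero_iff (hp : p.Prime) (F : Type) [Field F] [CharP F p] (k j : ℕ) :
    ((k.choose j : ℕ) : F) ≠ 0 ↔ Dom p j k := by
  have := Fact.mk hp
  have hp2 := hp.two_le
  set a := max j k with ha
  have hb : ∀ m, m ≤ a → m < p ^ a := fun m hm => lt_of_le_of_lt hm (Nat.lt_pow_self (by omega))
  have hj := hb j (le_max_left _ _)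
  have hk := hb k (le_max_right _ _)
  have h1 := Choose.choose_modEq_prod_range_choose_nat hk hj
  rw [Ne, CharP.cast_eq_zero_iff F p, (Nat.ModEq.dvd_iff h1 dvd_rfl), Prime.dvd_finsetProd_iff hp.prime]
  push Not
  have h2 : ∀ u v, u < p → (¬ p ∣ u.choose v ↔ v ≤ u) := by
    intro u v hu
    constructor
    · intro h
      by_contra hcon
      exact h (by rw [Nat.choose_eq_zero_of_lt (by omega)]; exact dvd_zero _)
    · intro h hd
      have h3 : p ∣ u.factorial := by
        rw [← Nat.choose_mul_factorial_mul_factorial h, mul_assoc]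
        exact hd.mul_right _
      have := (hp.dvd_factorial).mp h3
      omega
  constructor
  · intro h i
    rcases lt_or_ge i a with hi | hi
    · exact (h2 _ _ (Nat.mod_lt _ hp.pos)).mp (h i (mem_range.mpr hi))
    · rw [dig_eq_zero hp2 hj hi]
      exact Nat.zero_le _
  · intro h i _
    exact (h2 _ _ (Nat.mod_lt _ hp.pos)).mpr (h i)

lemma dvd_sub_iff (hp : p.Prime) {j k : ℕ} (h : j ≤ k) :
    (p ^ f - 1) ∣ (k - j) ↔ ((p : ℤ) ^ f - 1) ∣ (k : ℤ) - j := by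
  rw [← Int.natCast_dvd_natCast, Nat.cast_sub h, Nat.cast_sub (Nat.one_le_pow _ _ hp.pos)]
  push_cast
  rfl

variable {F : Type} [Field F] [Fintype F] [CharP F p]

lemma coeff_Tp_succ (hp : p.Prime) (hF : Fintype.card F = p ^ f) (d k m : ℕ) :
    (Tp F (d + 1) k).coeff m = -∑ j ∈ range k,
      if (0 < j ∧ j < k ∧ Dom p j k ∧ ((p : ℤ) ^ f - 1) ∣ (k : ℤ) - j) ∧ j ≤ m then
        ((k.choose j : ℕ) : F) * (Tp F d j).coeff (m - j) else 0 := by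
  rw [Tp_succ, coeff_neg, finsetSum_coeff]
  congr 1
  refine sum_congr rfl fun j hj => ?_
  have hjk := mem_range.mp hj
  simp only [hF, dvd_sub_iff hp hjk.le]
  by_cases h1 : 0 < j ∧ ((p : ℤ) ^ f - 1) ∣ (k : ℤ) - j
  · rw [if_pos h1, ← C_eq_natCast, coeff_C_mul, coeff_X_pow_mul']
    by_cases h2 : Dom p j k
    · by_cases h3 : j ≤ m
      · rw [if_pos h3, if_pos ⟨⟨h1.1, hjk, h2, h1.2⟩, h3⟩]
      · rw [if_neg h3, if_neg (fun h => h3 h.2), mul_zero]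
    · have := (choose_ne_zero_iff hp F k j).not.mpr h2
      rw [not_not.mp this, zero_mul, zero_mul, ite_self]
  · rw [if_neg h1, if_neg (fun h => h1 ⟨h.1.1, h.1.2.2.2⟩), coeff_zero]

lemma exists_chain_of_coeff (hp : p.Prime) (hF : Fintype.card F = p ^ f) (d : ℕ) :
    ∀ k m, (Tp F d k).coeff m ≠ 0 → ∃ L : List ℕ, L.length = d ∧ TCh p f k L ∧ L.sum = m := by
  induction d with
  | zero =>
    intro k m h
    refine ⟨[], rfl, trivial, ?_⟩
    by_contra hm
    apply h
    rw [Tp, coeff_one, if_neg (fun h => hm (by simpa using h.symm))]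
  | succ d ih =>
    intro k m h
    rw [coeff_Tp_succ hp hF, neg_ne_zero] at h
    obtain ⟨j, _, hj⟩ := exists_ne_zero_of_sum_ne_zero h
    split_ifs at hj with h1
    · obtain ⟨L, h2, h3, h4⟩ := ih j (m - j) (right_ne_zero_of_mul hj)
      refine ⟨j :: L, by simp [h2], ⟨h1.1, h3⟩, ?_⟩
      rw [List.sum_cons, h4]
      have := h1.2
      omega
    · exact absurd rfl hj

/-- A chain which is determined by its sum contributes a nonzero coefficient. -/
lemma coeff_ne_zero_of_unique (hp : p.Prime) (hF : Fintype.card F = p ^ f) (L : List ℕ) :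
    ∀ k, TCh p f k L → (∀ L', L'.length = L.length → TCh p f k L' → L'.sum = L.sum → L' = L) →
      (Tp F L.length k).coeff L.sum ≠ 0 := by
  induction L with
  | nil => intro k _ _; simp [Tp]
  | cons j L ih =>
    intro k h hu
    rw [List.length_cons, coeff_Tp_succ hp hF, neg_ne_zero, List.sum_cons]
    have hih := ih j h.2 (fun L' h1 h2 h3 => by
      have := hu (j :: L') (by simp [h1]) ⟨h.1, h2⟩ (by simp [h3])
      exact (List.cons.inj this).2)
    rw [sum_eq_single j]
    · rw [if_pos ⟨h.1, Nat.le_add_right _ _⟩, Nat.add_sub_cancel_left]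
      exact mul_ne_zero ((choose_ne_zero_iff hp F k j).mpr h.1.2.2.1) hih
    · intro j' _ hj'
      split_ifs with h1
      · rw [mul_eq_zero]
        right
        by_contra hc
        obtain ⟨L', h2, h3, h4⟩ := exists_chain_of_coeff hp hF _ _ _ hc
        have := hu (j' :: L') (by simp [h2]) ⟨h1.1, h3⟩ (by
          rw [List.sum_cons, List.sum_cons, h4]
          have := h1.2
          omega)
        exact hj' (List.cons.inj this).1
      · rfl
    · intro hj
      exact absurd (mem_range.mpr h.1.2.1) hj

/-- Removing the first term of a chain gives a chain with a smaller sum. -/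
lemma TCh.tail {k j : ℕ} {L : List ℕ} (h : TCh p f k (j :: L)) : TCh p f k L := by
  cases L with
  | nil => trivial
  | cons i L =>
    obtain ⟨⟨h1, h2, h3, h4⟩, ⟨h5, h6, h7, h8⟩, h9⟩ := h
    refine ⟨⟨h5, h6.trans h2, h7.trans h3, ?_⟩, h9⟩
    have := dvd_add h4 h8
    rwa [sub_add_sub_cancel] at this

lemma TCh.shorten {k d : ℕ} : ∀ {L : List ℕ}, TCh p f k L → d < L.length →
    ∃ L' : List ℕ, L'.length = d ∧ TCh p f k L' ∧ L'.sum < L.sum := by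
  intro L
  induction L with
  | nil => intro _ h; simp at h
  | cons j L ih =>
    intro h hd
    have hj := h.1.1
    rcases Nat.lt_or_ge d L.length with h1 | h1
    · obtain ⟨L', h2, h3, h4⟩ := ih (h.tail) h1
      exact ⟨L', h2, h3, by rw [List.sum_cons]; omega⟩
    · refine ⟨L, ?_, h.tail, by rw [List.sum_cons]; omega⟩
      rw [List.length_cons] at hd
      omega

/-- `P d` has exact `X`-order `m`, and every `P d'` with `d' > d` has a larger order. -/
def LowOrd {F : Type} [Field F] (P : ℕ → F[X]) (d m : ℕ) : Prop :=
  (P d).coeff m ≠ 0 ∧ X ^ m ∣ P d ∧ ∀ d', d < d' → X ^ (m + 1) ∣ P d'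

lemma Tp_lowOrd (hp : p.Prime) (hF : Fintype.card F = p ^ f) {M k : ℕ} (hk : k < p ^ M) (d : ℕ)
    (h : ∀ c : ZMod f, (d : ℤ) * ((p : ℤ) ^ f - 1) < Av p f M k c) :
    ∃ m, LowOrd (fun d => Tp F d k) d m := by
  obtain ⟨L, rfl, h2, h3⟩ := exists_min_chain hp.two_le hk d h
  refine ⟨L.sum, coeff_ne_zero_of_unique hp hF L k h2 (fun L' a b c => (h3 L' a b).2 c), ?_, ?_⟩
  · rw [X_pow_dvd_iff]
    intro m hm
    by_contra hc
    obtain ⟨L', h4, h5, h6⟩ := exists_chain_of_coeff hp hF _ _ _ hc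
    have := (h3 L' h4 h5).1
    omega
  · intro d' hd'
    rw [X_pow_dvd_iff]
    intro m hm
    by_contra hc
    obtain ⟨L', h4, h5, h6⟩ := exists_chain_of_coeff hp hF _ _ _ hc
    obtain ⟨L'', h7, h8, h9⟩ := h5.shorten (d := L.length) (by omega)
    have := (h3 L'' h7 h8).1
    omega

lemma Tp_eq_zero (hp : p.Prime) (hF : Fintype.card F = p ^ f) {M k d : ℕ} (hk : k < p ^ M)
    (h0 : 0 < k) {c : ZMod f} (h : Av p f M k c ≤ (d : ℤ) * ((p : ℤ) ^ f - 1)) :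
    Tp F d k = 0 := by
  ext m
  rw [coeff_zero]
  by_contra hc
  obtain ⟨L, h4, h5, h6⟩ := exists_chain_of_coeff hp hF _ _ _ hc
  have := h5.length_lt hp.two_le hk h0 c
  rw [h4] at this
  omega

lemma dvd_Av_iff {M k : ℕ} (hk : k < p ^ M) (c : ZMod f) :
    ((p : ℤ) ^ f - 1) ∣ Av p f M k c ↔ ((p : ℤ) ^ f - 1) ∣ (k : ℤ) := by
  have h1 := Av_congr (f := f) hk c
  have hco : IsCoprime ((p : ℤ) ^ f - 1) ((p : ℤ) ^ (-c).val) := by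
    apply IsCoprime.pow_right
    refine ⟨-1, (p : ℤ) ^ (f - 1), ?_⟩
    have : (p : ℤ) ^ f = (p : ℤ) ^ (f - 1) * p := by
      rw [← pow_succ, Nat.sub_add_cancel (NeZero.pos f)]
    rw [this]
    ring
  constructor
  · intro h
    have := dvd_sub h h1
    rw [sub_sub_cancel] at this
    exact hco.dvd_of_dvd_mul_left this
  · intro h
    have := dvd_add h1 (h.mul_left ((p : ℤ) ^ (-c).val))
    rwa [sub_add_cancel] at this

lemma dvd_nat_iff (hp : p.Prime) (k : ℕ) :
    (p ^ f - 1) ∣ k ↔ ((p : ℤ) ^ f - 1) ∣ (k : ℤ) := by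
  have := dvd_sub_iff (f := f) hp (Nat.zero_le k)
  simpa using this

lemma powerSum_eq_zero (hp : p.Prime) (hF : Fintype.card F = p ^ f) {M k d : ℕ} (hk : k < p ^ M)
    (h0 : 0 < k) {c : ZMod f} (h : Av p f M k c < (d : ℤ) * ((p : ℤ) ^ f - 1)) :
    powerSum F d k = 0 := by
  have hQ := Qpos (p := p) (f := f) hp.two_le
  cases d with
  | zero =>
    have := Av_pos (f := f) hp.two_le hk h0 c
    simp at h
    omega
  | succ d =>
    rw [powerSum_eq_Tp d k h0, Tp_eq_zero hp hF hk h0 h.le, zero_sub, neg_eq_zero]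
    split_ifs with hd
    · rw [hF, dvd_nat_iff hp, ← dvd_Av_iff hk c] at hd
      obtain ⟨t, ht⟩ := hd
      apply Tp_eq_zero hp hF hk h0 (c := c)
      rw [ht, mul_comm] at h ⊢
      push_cast at h
      have := lt_of_mul_lt_mul_right h hQ.le
      exact mul_le_mul_of_nonneg_right (by omega) hQ.le
    · rfl

/-- Up to the vanishing bound, `S_d(-k)` is nonzero and has smaller `X`-order than all later power
sums. -/
lemma powerSum_lowOrd (hp : p.Prime) (hF : Fintype.card F = p ^ f) {M k d : ℕ} (hk : k < p ^ M)
    (h0 : 0 < k) (hd : 0 < d)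
    (h : ∀ c : ZMod f, (d : ℤ) * ((p : ℤ) ^ f - 1) ≤ Av p f M k c) :
    ∃ m, LowOrd (fun d => powerSum F d k) d m := by
  have hQ := Qpos (p := p) (f := f) hp.two_le
  obtain ⟨d, rfl⟩ : ∃ d', d = d' + 1 := ⟨d - 1, by omega⟩
  by_cases hdv : (Fintype.card F - 1) ∣ k
  · obtain ⟨m, h1, h2, h3⟩ := Tp_lowOrd hp hF hk d (fun c => by
      have := h c
      push_cast at this
      linarith)
    have hP : ∀ e, powerSum F (e + 1) k = Tp F (e + 1) k - Tp F e k := fun e => by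
      rw [powerSum_eq_Tp e k h0, if_pos hdv]
    refine ⟨m, ?_, ?_, ?_⟩
    · show (powerSum F (d + 1) k).coeff m ≠ 0
      rw [hP, coeff_sub, X_pow_dvd_iff.mp (h3 (d + 1) (by omega)) m (by omega), zero_sub]
      exact neg_ne_zero.mpr h1
    · show X ^ m ∣ powerSum F (d + 1) k
      rw [hP]
      exact dvd_sub ((pow_dvd_pow _ (by omega)).trans (h3 (d + 1) (by omega))) h2
    · intro d' hd'
      obtain ⟨e, rfl⟩ : ∃ e, d' = e + 1 := ⟨d' - 1, by omega⟩
      show X ^ (m + 1) ∣ powerSum F (e + 1) k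
      rw [hP]
      exact dvd_sub (h3 _ (by omega)) (h3 _ (by omega))
  · obtain ⟨m, h1, h2, h3⟩ := Tp_lowOrd hp hF hk (d + 1) (fun c => by
      refine lt_of_le_of_ne (h c) fun he => hdv ?_
      rw [hF, dvd_nat_iff hp, ← dvd_Av_iff hk c, ← he]
      exact dvd_mul_left _ _)
    have hP : ∀ e, powerSum F (e + 1) k = Tp F (e + 1) k := fun e => by
      rw [powerSum_eq_Tp e k h0, if_neg hdv, sub_zero]
    refine ⟨m, ?_, ?_, ?_⟩
    · show (powerSum F (d + 1) k).coeff m ≠ 0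
      rw [hP]
      exact h1
    · show X ^ m ∣ powerSum F (d + 1) k
      rw [hP]
      exact h2
    · intro d' hd'
      obtain ⟨e, rfl⟩ : ∃ e, d' = e + 1 := ⟨d' - 1, by omega⟩
      show X ^ (m + 1) ∣ powerSum F (e + 1) k
      rw [hP]
      exact h3 _ hd'

end coefficients

end MZVal

/-! ### Digit sums, multiple sums and the theorem -/

namespace MZVal

open Finset

set_option linter.unusedSectionVars false

section digits

variable {p f : ℕ} [NeZero f]

lemma digits_sum_eq (hp : 2 ≤ p) (T : ℕ) : ∀ m < p ^ (f * T),
    (Nat.digits (p ^ f) m).sum = ∑ j ∈ range (f * T), dig p m j * p ^ (j % f) := by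
  induction T with
  | zero =>
    intro m hm
    have : m = 0 := by simpa using hm
    simp [this]
  | succ T ih =>
    intro m hm
    rcases Nat.eq_zero_or_pos m with rfl | h0
    · simp [dig_zero]
    · have h1 : 1 < p ^ f := Nat.one_lt_pow (NeZero.ne f) (by omega)
      have h2 : f * (T + 1) = f + f * T := by ring
      rw [h2] at hm ⊢
      rw [Nat.digits_def' h1 h0, List.sum_cons, sum_range_add, ih (m / p ^ f) (by
        rw [Nat.div_lt_iff_lt_mul (by omega), mul_comm, ← pow_add]; exact hm)]
      congr 1
      · have h3 : ∀ M, ∑ j ∈ range M, dig p m j * p ^ j = m % p ^ M := by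
          intro M
          induction M with
          | zero => simp [Nat.mod_one]
          | succ M ih => rw [sum_range_succ, ih, Nat.mod_pow_succ, dig, mul_comm (p ^ M)]
        rw [← h3]
        refine sum_congr rfl fun j hj => ?_
        rw [Nat.mod_eq_of_lt (mem_range.mp hj)]
      · refine sum_congr rfl fun j _ => ?_
        rw [Nat.add_mod_left]
        simp only [dig, Nat.div_div_eq_div_mul, pow_add]

/-- The base-`q` digit sums of `k * p ^ i` are the weighted digit sums `Av`. -/
lemma digits_sum_eq_Av (hp : 2 ≤ p) {M k : ℕ} (hk : k < p ^ M) (i : ℕ) :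
    ((Nat.digits (p ^ f) (k * p ^ i)).sum : ℤ) = Av p f M k (-(i : ZMod f)) := by
  have hf := NeZero.pos f
  have hle : i + M ≤ f * (i + M) := Nat.le_mul_of_pos_left _ hf
  have h1 : k * p ^ i < p ^ (f * (i + M)) := by
    calc k * p ^ i < p ^ M * p ^ i := Nat.mul_lt_mul_of_pos_right hk (by positivity)
      _ = p ^ (i + M) := by rw [← pow_add, add_comm]
      _ ≤ _ := Nat.pow_le_pow_right (by omega) hle
  obtain ⟨R, hR⟩ : ∃ R, f * (i + M) = i + (M + R) := ⟨f * (i + M) - (i + M), by omega⟩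
  rw [digits_sum_eq hp (i + M) _ h1, hR, sum_range_add, sum_range_add]
  have h2 : ∑ j ∈ range i, dig p (k * p ^ i) j * p ^ (j % f) = 0 := by
    refine sum_eq_zero fun j hj => ?_
    have hj := mem_range.mp hj
    have : dig p (k * p ^ i) j = 0 := by
      have h3 : k * p ^ i = k * p ^ (i - j - 1) * p * p ^ j := by
        rw [mul_assoc, mul_assoc, ← pow_succ', ← pow_add]
        congr 2
        omega
      rw [dig, h3, Nat.mul_div_cancel _ (by positivity)]
      exact Nat.mul_mod_left _ _
    rw [this, zero_mul]
  have h3 : ∀ j, dig p (k * p ^ i) (i + j) = dig p k j := by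
    intro j
    rw [dig, dig, pow_add, mul_comm k, Nat.mul_div_mul_left _ _ (by positivity)]
  have h4 : ∑ x ∈ range R, dig p (k * p ^ i) (i + (M + x)) * p ^ ((i + (M + x)) % f) = 0 := by
    refine sum_eq_zero fun j _ => ?_
    rw [h3, dig_eq_zero hp hk (by omega), zero_mul]
  rw [h2, h4, zero_add, add_zero, Av]
  push_cast
  refine sum_congr rfl fun j _ => ?_
  rw [h3, sub_neg_eq_add, add_comm (j : ZMod f), ← Nat.cast_add, ZMod.val_natCast]

lemma Lval_lt_iff (hp : 2 ≤ p) {M k : ℕ} (hk : k < p ^ M) (d : ℕ) :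
    Lval (p ^ f) p f k < (d : ℚ) ↔ ∃ c : ZMod f, Av p f M k c < (d : ℤ) * ((p : ℤ) ^ f - 1) := by
  have hQ := Qpos (p := p) (f := f) hp
  have hf := NeZero.pos f
  have key : ∀ i : ℕ, (((Nat.digits (p ^ f) (k * p ^ i)).sum : ℚ) / (((p ^ f : ℕ) : ℚ) - 1) < d ↔
      Av p f M k (-(i : ZMod f)) < (d : ℤ) * ((p : ℤ) ^ f - 1)) := by
    intro i
    have hQ' : (0 : ℚ) < ((p ^ f : ℕ) : ℚ) - 1 := by
      have : (((p : ℤ) ^ f - 1 : ℤ) : ℚ) = ((p ^ f : ℕ) : ℚ) - 1 := by push_cast; rfl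
      rw [← this]
      exact_mod_cast hQ
    rw [div_lt_iff₀ hQ', ← digits_sum_eq_Av hp hk i, ← Int.cast_lt (R := ℚ)]
    generalize (Nat.digits (p ^ f) (k * p ^ i)).sum = n
    push_cast
    rfl
  unfold Lval
  refine Iff.trans (Finset.inf'_lt_iff _) ?_
  constructor
  · rintro ⟨i, _, hi⟩
    exact ⟨_, (key i).mp hi⟩
  · rintro ⟨c, hc⟩
    have hlt := ZMod.val_lt (-c)
    refine ⟨(-c).val, mem_Icc.mpr ⟨Nat.zero_le _, by omega⟩, (key _).mpr ?_⟩
    rw [ZMod.natCast_zmod_val, neg_neg]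
    exact hc

end digits

section sums

variable {F : Type} [Field F]

lemma coeff_prod_of_dvd {ι : Type} (s : Finset ι) (A : ι → F[X]) (m : ι → ℕ)
    (h : ∀ i ∈ s, X ^ m i ∣ A i) :
    (∏ i ∈ s, A i).coeff (∑ i ∈ s, m i) = ∏ i ∈ s, (A i).coeff (m i) := by
  have : ∀ i, ∃ B : F[X], i ∈ s → A i = X ^ m i * B := fun i => by
    by_cases hi : i ∈ s
    · obtain ⟨B, hB⟩ := h i hi
      exact ⟨B, fun _ => hB⟩
    · exact ⟨0, fun h => absurd h hi⟩
  choose B hB using this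
  rw [prod_congr rfl hB, prod_mul_distrib, prod_pow_eq_pow_sum]
  have h1 := coeff_X_pow_mul (∏ i ∈ s, B i) (∑ i ∈ s, m i) 0
  rw [zero_add] at h1
  rw [h1, coeff_zero_eq_eval_zero, eval_prod]
  refine prod_congr rfl fun i hi => ?_
  have h2 := coeff_X_pow_mul (B i) (m i) 0
  rw [zero_add] at h2
  rw [hB i hi, h2, coeff_zero_eq_eval_zero]

lemma strictAnti_add_le {r : ℕ} {d : Fin r → ℕ} (hd : StrictAnti d) (i : Fin r) (n : ℕ) :
    ∀ j : Fin r, (j : ℕ) = i + n → d j + n ≤ d i := by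
  induction n with
  | zero =>
    intro j hj
    have : j = i := Fin.ext hj
    simp [this]
  | succ n ih =>
    intro j hj
    have hlt := j.isLt
    have h1 := ih ⟨i + n, by omega⟩ rfl
    have h2 : d j < d ⟨i + n, by omega⟩ := hd (Fin.lt_def.mpr (by simp; omega))
    omega

lemma strictAnti_lower {r : ℕ} {d : Fin r → ℕ} (hd : StrictAnti d) (i : Fin r) :
    r - 1 - i ≤ d i := by
  have hi := i.isLt
  have := strictAnti_add_le hd i (r - 1 - i) ⟨r - 1, by omega⟩ (by simp; omega)
  omega

/-- A strictly decreasing sequence of length `r` starting at or below `r - 1` is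
`(r - 1, …, 1, 0)`. -/
lemma strictAnti_eq {r : ℕ} (hr : 0 < r) {d : Fin r → ℕ} (hd : StrictAnti d)
    (h0 : d ⟨0, hr⟩ ≤ r - 1) (i : Fin r) : d i = r - 1 - i := by
  have h1 := strictAnti_lower hd i
  have h2 := strictAnti_add_le hd ⟨0, hr⟩ i i (by simp)
  omega

/-- The multiple sum over strictly decreasing indices is nonzero as soon as the term
`(r - 1, …, 1, 0)` is the only one of minimal `X`-order. -/
lemma finsum_ne_zero {r N : ℕ} (hr : 0 < r) (P : Fin r → ℕ → F[X])
    (hN : ∀ i d, N ≤ d → P i d = 0) (m : Fin r → ℕ)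
    (h1 : ∀ i, (P i (r - 1 - i)).coeff (m i) ≠ 0)
    (h2 : ∀ (i : Fin r) d, r - 1 - i ≤ d → X ^ m i ∣ P i d)
    (h3 : ∀ d, r - 1 < d → X ^ (m ⟨0, hr⟩ + 1) ∣ P ⟨0, hr⟩ d) :
    (∑ᶠ d ∈ {d : Fin r → ℕ | StrictAnti d}, ∏ i, P i (d i)) ≠ 0 := by
  set t : Finset (Fin r → ℕ) :=
    (Fintype.piFinset fun _ => range N).filter StrictAnti with ht
  have hsum : (∑ᶠ d ∈ {d : Fin r → ℕ | StrictAnti d}, ∏ i, P i (d i)) =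
      ∑ d ∈ t, ∏ i, P i (d i) := by
    apply finsum_mem_eq_sum_of_inter_support_eq
    ext d
    simp only [Set.mem_inter_iff, Set.mem_ofPred_eq, Function.mem_support, ht, coe_filter,
      Fintype.mem_piFinset, mem_range]
    constructor
    · rintro ⟨ha, hb⟩
      refine ⟨⟨fun i => ?_, ha⟩, hb⟩
      by_contra hc
      exact hb (prod_eq_zero (mem_univ i) (hN i _ (by omega)))
    · rintro ⟨⟨_, ha⟩, hb⟩
      exact ⟨ha, hb⟩
  rw [hsum]
  intro hz
  have hc : (∑ d ∈ t, ∏ i, P i (d i)).coeff (∑ i, m i) = 0 := by rw [hz, coeff_zero]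
  rw [finsetSum_coeff, sum_eq_single (fun i : Fin r => r - 1 - (i : ℕ))] at hc
  · rw [coeff_prod_of_dvd _ _ _ (fun i _ => h2 i _ le_rfl), prod_eq_zero_iff] at hc
    obtain ⟨i, _, hi⟩ := hc
    exact h1 i hi
  · intro d hd hne
    have hd2 : StrictAnti d := (mem_filter.mp hd).2
    have h0 : r - 1 < d ⟨0, hr⟩ := by
      by_contra hcon
      exact hne (funext fun i => strictAnti_eq hr hd2 (by omega) i)
    have hdiv : X ^ (∑ i, m i + 1) ∣ ∏ i, P i (d i) := by
      rw [← mul_prod_erase univ _ (mem_univ (⟨0, hr⟩ : Fin r)),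
        ← add_sum_erase univ _ (mem_univ (⟨0, hr⟩ : Fin r)), add_right_comm, pow_add,
        ← prod_pow_eq_pow_sum]
      exact mul_dvd_mul (h3 _ h0) (prod_dvd_prod_of_dvd _ _ fun i _ =>
        h2 i _ (strictAnti_lower hd2 i))
    exact X_pow_dvd_iff.mp hdiv _ (Nat.lt_succ_self _)
  · intro hd
    exfalso
    apply hd
    rw [ht, mem_filter, Fintype.mem_piFinset]
    refine ⟨fun i => ?_, fun i j hij => ?_⟩
    · rw [mem_range]
      by_contra hcon
      exact h1 i (by rw [hN i _ (by omega), coeff_zero])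
    · have := Fin.lt_def.mp hij
      have := j.isLt
      show r - 1 - (j : ℕ) < r - 1 - (i : ℕ)
      omega

lemma finsum_one {N : ℕ} (P : Fin 1 → ℕ → F[X]) (hN : ∀ i d, N ≤ d → P i d = 0) :
    (∑ᶠ d ∈ {d : Fin 1 → ℕ | StrictAnti d}, ∏ i, P i (d i)) = ∑ n ∈ range N, P 0 n := by
  have h1 : {d : Fin 1 → ℕ | StrictAnti d} = Set.univ :=
    Set.eq_univ_of_forall fun d => Subsingleton.strictAnti d
  rw [h1, finsum_mem_univ]
  simp only [Fin.prod_univ_one]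
  have h2 : (∑ᶠ d : Fin 1 → ℕ, P 0 (d 0)) = ∑ᶠ n : ℕ, P 0 n :=
    finsum_eq_of_bijective (fun d : Fin 1 → ℕ => d 0)
      (Equiv.funUnique (Fin 1) ℕ).bijective (fun _ => rfl)
  rw [h2]
  apply finsum_eq_sum_of_support_subset
  intro n hn
  rw [coe_range, Set.mem_Iio]
  by_contra hc
  exact hn (hN 0 n (by omega))

end sums

section depthOne

variable {p f : ℕ} [NeZero f] {F : Type} [Field F] [Fintype F] [CharP F p]

lemma sum_powerSum_of_dvd {k : ℕ} (h0 : 0 < k) (hd : (Fintype.card F - 1) ∣ k) (N : ℕ) :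
    ∑ n ∈ range (N + 1), powerSum F n k = Tp F N k := by
  induction N with
  | zero => simp [powerSum_zero, Tp]
  | succ N ih => rw [sum_range_succ, ih, powerSum_eq_Tp N k h0, if_pos hd]; ring

lemma coeff_sum_powerSum (hp : p.Prime) (hF : Fintype.card F = p ^ f) {k : ℕ} (h0 : 0 < k)
    (hd : ¬ (Fintype.card F - 1) ∣ k) (N : ℕ) :
    (∑ n ∈ range (N + 1), powerSum F n k).coeff 0 = 1 := by
  induction N with
  | zero => simp [powerSum_zero]
  | succ N ih =>
    rw [sum_range_succ, coeff_add, ih, powerSum_eq_Tp N k h0, if_neg hd, sub_zero, add_eq_left]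
    by_contra hc
    obtain ⟨L, h1, h2, h3⟩ := exists_chain_of_coeff hp hF _ _ _ hc
    cases L with
    | nil => simp at h1
    | cons j L =>
      have := h2.1.1
      rw [List.sum_cons] at h3
      omega

/-- All power sums and all `Tp` vanish from some degree on. -/
lemma exists_bound_powerSum (hp : p.Prime) (hF : Fintype.card F = p ^ f) {k : ℕ} (h0 : 0 < k) :
    ∃ N, ∀ d, N ≤ d → powerSum F d k = 0 ∧ Tp F d k = 0 := by
  have hk : k < p ^ k := Nat.lt_pow_self hp.one_lt
  have hQ := Qpos (p := p) (f := f) hp.two_le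
  have hA := Av_pos (f := f) hp.two_le hk h0 0
  refine ⟨(Av p f k k 0).toNat + 1, fun d hd => ?_⟩
  have h1 : Av p f k k (0 : ZMod f) < (d : ℤ) * ((p : ℤ) ^ f - 1) := by
    have h2 : Av p f k k (0 : ZMod f) < d := by omega
    nlinarith
  exact ⟨powerSum_eq_zero hp hF hk h0 h1, Tp_eq_zero hp hF hk h0 h1.le⟩

end depthOne

end MZVal

theorem stmt16 (p f q : ℕ) (hp : p.Prime) (hf : 0 < f) (hq : q = p ^ f)
    (F : Type) [Field F] [Fintype F] (hF : Fintype.card F = q)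
    (r : ℕ) (hr : 1 ≤ r) (s : Fin r → ℤ) (hs : ∀ i, s i < 0) :
    zetaMZV F s = 0 ↔
      (1 < r ∧ ∃ i : Fin r, (i : ℕ) < r - 1 ∧
          Lval q p f (-(s i)).toNat < ((r - 1 - (i : ℕ) : ℕ) : ℚ)) ∨
      (r = 1 ∧ ∀ i, ((q : ℤ) - 1) ∣ s i) := by
  subst hq
  have : NeZero f := ⟨hf.ne'⟩
  have : Fact p.Prime := ⟨hp⟩
  have : CharP F p := charP_of_card_eq_prime_pow hF
  have hpos : ∀ i, 0 < (-(s i)).toNat := fun i => by have := hs i; omega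
  have hlt : ∀ i, (-(s i)).toNat < p ^ (-(s i)).toNat := fun i => Nat.lt_pow_self hp.one_lt
  choose N' hN' using fun i => MZVal.exists_bound_powerSum (F := F) hp hF (hpos i)
  set N := ∑ i, N' i with hNdef
  have hN : ∀ i d, N ≤ d → powerSum F d (-(s i)).toNat = 0 ∧ MZVal.Tp F d (-(s i)).toNat = 0 :=
    fun i d hd => hN' i d (le_trans (Finset.single_le_sum (fun _ _ => Nat.zero_le _)
      (Finset.mem_univ i)) hd)
  rcases Nat.lt_or_ge 1 r with h1 | h1
  · have hne : r ≠ 1 := by omega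
    simp only [h1, true_and, hne, false_and, or_false]
    constructor
    · intro hz
      by_contra hcon
      push Not at hcon
      have hm : ∀ i : Fin r, ∃ m, (powerSum F (r - 1 - i) (-(s i)).toNat).coeff m ≠ 0 ∧
          (∀ d, r - 1 - i ≤ d → X ^ m ∣ powerSum F d (-(s i)).toNat) ∧
          ((i : ℕ) < r - 1 → ∀ d, r - 1 - i < d → X ^ (m + 1) ∣ powerSum F d (-(s i)).toNat) := by
        intro i
        have hi := i.isLt
        rcases Nat.lt_or_ge i (r - 1) with hlast | hlast
        · have h2 := hcon i hlast
          rw [← not_lt, MZVal.Lval_lt_iff hp.two_le (hlt i)] at h2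
          push Not at h2
          obtain ⟨m, ha, hb, hc⟩ := MZVal.powerSum_lowOrd hp hF (hlt i) (hpos i)
            (d := r - 1 - i) (by omega) h2
          refine ⟨m, ha, fun d hd => ?_, fun _ => hc⟩
          rcases hd.lt_or_eq with hd | rfl
          · exact (pow_dvd_pow _ (Nat.le_succ m)).trans (hc d hd)
          · exact hb
        · refine ⟨0, ?_, fun d _ => by simp, fun h => by omega⟩
          have : r - 1 - (i : ℕ) = 0 := by omega
          rw [this, MZVal.powerSum_zero]
          simp
      choose m ha hb hc using hm
      exact MZVal.finsum_ne_zero (by omega) (fun i d => powerSum F d (-(s i)).toNat)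
        (fun i d hd => (hN i d hd).1) m ha hb
        (hc ⟨0, by omega⟩ (by simp; omega)) hz
    · rintro ⟨i, hi, hL⟩
      rw [MZVal.Lval_lt_iff hp.two_le (hlt i)] at hL
      obtain ⟨c, hL⟩ := hL
      apply finsum_mem_eq_zero_of_forall_eq_zero
      intro d hd
      refine Finset.prod_eq_zero (Finset.mem_univ i) ?_
      apply MZVal.powerSum_eq_zero hp hF (hlt i) (hpos i) (c := c)
      refine hL.trans_le (mul_le_mul_of_nonneg_right ?_ (MZVal.Qpos hp.two_le).le)
      exact_mod_cast MZVal.strictAnti_lower hd i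
  · obtain rfl : r = 1 := by omega
    have hz : zetaMZV F s = ∑ n ∈ Finset.range (N + 1), powerSum F n (-(s 0)).toNat :=
      MZVal.finsum_one (fun i d => powerSum F d (-(s i)).toNat)
        (fun i d hd => (hN i d (by omega)).1)
    have hdv : (∀ i, (((p ^ f : ℕ) : ℤ) - 1) ∣ s i) ↔
        (Fintype.card F - 1) ∣ (-(s 0)).toNat := by
      rw [hF, MZVal.dvd_nat_iff hp, Int.toNat_of_nonneg (by have := hs 0; omega), dvd_neg]
      push_cast
      exact ⟨fun h => h 0, fun h i => by rwa [Subsingleton.elim i 0]⟩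
    rw [hdv]
    simp only [lt_irrefl, false_and, true_and, false_or]
    rw [hz]
    constructor
    · intro h0
      by_contra hcon
      have := MZVal.coeff_sum_powerSum hp hF (hpos 0) hcon N
      rw [h0, coeff_zero] at this
      exact zero_ne_one this
    · intro hd
      rw [MZVal.sum_powerSum_of_dvd (hpos 0) hd, (hN 0 N le_rfl).2]
end

section
/- Let q = p^f be a power of a prime p, let r > 1, and let s = (s_1,…,s_r) ∈ ℤ^r. Then s satisfies the trivial-zero condition for every monic irreducible v ∈ F_q[t] if and only if s satisfies the trivial-zero condition for every monic irreducible v ∈ F_q[t] of degree at most r. -/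
/-!
For `e ≥ r` the first alternative of the trivial-zero condition cannot hold, because `L_k ≥ 0` and
`r - i < r ≤ e`; the second alternative only asks `e` to be large, so it passes from `e` to any
larger degree. Hence the condition in degree `r` implies the condition in every degree `≥ r`, and
it remains to know that `F[X]` has a monic irreducible polynomial of degree exactly `r`: the minimal
polynomial of a primitive element of the degree-`r` extension of the finite field `F`.
-/

open Polynomial

open scoped Classical

theorem Lval_nonneg {q : ℕ} (hq : 1 ≤ q) (p f k : ℕ) : 0 ≤ Lval q p f k := by
  have h : (0 : ℚ) ≤ (q : ℚ) - 1 := sub_nonneg.mpr (by exact_mod_cast hq)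
  exact Finset.le_inf' _ _ fun i _ => div_nonneg (Nat.cast_nonneg _) h

/-- In degree `r` only the second alternative of the condition is possible, and that alternative
is monotone in the degree. -/
theorem TrivialZeroCond.of_le {q p f r : ℕ} (hq : 1 ≤ q) {s : Fin r → ℤ} {e : ℕ} (he : r ≤ e)
    (h : TrivialZeroCond q p f s r) : TrivialZeroCond q p f s e := by
  rcases h with ⟨i, -, hi⟩ | ⟨i, j, hji, hsi, hsj, -, hLi, hLj⟩
  · have hL := Lval_nonneg hq p f (-(s i)).toNat
    have hle : ((r - 1 - (i : ℕ) : ℕ) : ℚ) ≤ (r : ℚ) := by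
      exact_mod_cast (by omega : r - 1 - (i : ℕ) ≤ r)
    linarith
  · exact Or.inr ⟨i, j, hji, hsi, hsj, by omega, hLi, hLj⟩

theorem exists_monic_irreducible_natDegree (F : Type) [Field F] [Finite F] {n : ℕ} (hn : n ≠ 0) :
    ∃ v : F[X], v.Monic ∧ Irreducible v ∧ v.natDegree = n := by
  haveI : NeZero n := ⟨hn⟩
  obtain ⟨p, hchar⟩ := CharP.exists F
  haveI : Fact p.Prime := ⟨CharP.char_is_prime F p⟩
  obtain ⟨α, hα⟩ := Field.exists_primitive_element F (FiniteField.Extension F p n)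
  have hint : IsIntegral F α := .of_finite F α
  refine ⟨minpoly F α, minpoly.monic hint, minpoly.irreducible hint, ?_⟩
  rw [(Field.primitive_element_iff_minpoly_natDegree_eq F α).mp hα,
    FiniteField.finrank_extension]

theorem stmt17 (p f q : ℕ) (hp : p.Prime) (hf : 0 < f) (hq : q = p ^ f)
    (F : Type) [Field F] [Fintype F] (hF : Fintype.card F = q)
    (r : ℕ) (hr : 1 < r) (s : Fin r → ℤ) :
    (∀ v : F[X], v.Monic → Irreducible v → TrivialZeroCond q p f s v.natDegree) ↔
    (∀ v : F[X], v.Monic → Irreducible v → v.natDegree ≤ r →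
        TrivialZeroCond q p f s v.natDegree) := by
  refine ⟨fun h v hm hi _ => h v hm hi, fun h v hm hi => ?_⟩
  rcases le_total v.natDegree r with hv | hv
  · exact h v hm hi hv
  · obtain ⟨w, hwm, hwi, hwd⟩ := exists_monic_irreducible_natDegree F (n := r) (by omega)
    have hw := h w hwm hwi hwd.le
    rw [hwd] at hw
    exact hw.of_le (hq ▸ Nat.one_le_pow _ _ hp.pos) hv
end

section
/- Let q = p^f be a power of a prime p with q > 2, let r ≥ 3, and let s = (s_1,…,s_r) ∈ ℤ^r be such that s_i = −p^{n_i} for some integers n_i ≥ 0 for each i ∈ {1,2,3}. Then s satisfies the trivial-zero condition for every monic irreducible v ∈ F_q[t]. -/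
/-!
Multiplying `p ^ n` by a suitable `p ^ i` with `0 ≤ i ≤ f - 1` gives a power of `q`, whose base-`q`
digit sum is `1`. Hence `L_{p^n} ≤ 1 / (q - 1) < 1`, as `q > 2` (`Lval_prime_pow_lt_one`).
Let `e = deg v`. If `e ≤ r - 2`, the first alternative of the trivial-zero condition holds at the
first entry, since `L + e < e + 1 ≤ r - 1`. If `e > r - 2`, the second alternative holds for the
first two entries, since `r - 2 ≥ 1 > L`.
-/

open Polynomial

open scoped Classical

lemma digits_sum_base_pow {q : ℕ} (hq : 1 < q) (m : ℕ) : (Nat.digits q (q ^ m)).sum = 1 := by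
  have h := Nat.digits_base_pow_mul (b := q) (k := m) (m := 1) hq one_pos
  rw [mul_one] at h
  rw [h, Nat.digits_of_lt q 1 one_ne_zero hq]
  simp

lemma Lval_prime_pow_lt_one {p f q : ℕ} (hf : 0 < f) (hq : q = p ^ f) (hq2 : 2 < q) (n : ℕ) :
    Lval q p f (p ^ n) < 1 := by
  have hq' : (2 : ℚ) < q := by exact_mod_cast hq2
  unfold Lval
  refine (Finset.inf'_lt_iff _).2 ?_
  -- The least `i ≥ 0` with `n + i` divisible by `f`.
  obtain ⟨i, hi, m, hm⟩ : ∃ i ≤ f - 1, ∃ m, n + i = f * m := by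
    have hdiv := Nat.div_add_mod n f
    have hlt := Nat.mod_lt n hf
    rcases Nat.eq_zero_or_pos (n % f) with h0 | h0
    · exact ⟨0, by omega, n / f, by omega⟩
    · exact ⟨f - n % f, by omega, n / f + 1, by rw [mul_add]; omega⟩
  refine ⟨i, by simpa using hi, ?_⟩
  rw [← pow_add, hm, pow_mul, ← hq, digits_sum_base_pow (by omega), div_lt_one (by linarith)]
  push_cast
  linarith

theorem stmt18 (p f q : ℕ) (hp : p.Prime) (hf : 0 < f) (hq : q = p ^ f)
    (F : Type) [Field F] [Fintype F] (hF : Fintype.card F = q)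
    (hq2 : 2 < q)
    (r : ℕ) (hr : 3 ≤ r) (s : Fin r → ℤ)
    (hs : ∀ i : Fin r, (i : ℕ) < 3 → ∃ n : ℕ, s i = -(p : ℤ) ^ n) :
    ∀ v : F[X], v.Monic → Irreducible v → TrivialZeroCond q p f s v.natDegree := by
  intro v _ _
  have key : ∀ i : Fin r, (i : ℕ) < 3 → s i < 0 ∧ Lval q p f (-(s i)).toNat < 1 := by
    intro i hi
    obtain ⟨n, hn⟩ := hs i hi
    have hpos : (0 : ℤ) < (p : ℤ) ^ n := pow_pos (by exact_mod_cast hp.pos) n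
    refine ⟨by omega, ?_⟩
    have h : (-(s i)).toNat = p ^ n := by
      rw [hn, neg_neg]
      exact_mod_cast Int.toNat_natCast (p ^ n)
    rw [h]
    exact Lval_prime_pow_lt_one hf hq hq2 n
  obtain ⟨hs0, hL0⟩ := key ⟨0, by omega⟩ (by simp)
  obtain ⟨hs1, hL1⟩ := key ⟨1, by omega⟩ (by simp)
  by_cases he : v.natDegree + 1 ≤ r - 1 - 0
  · refine Or.inl ⟨⟨0, by omega⟩, hs0, ?_⟩
    have he' : ((v.natDegree : ℚ) + 1) ≤ ((r - 1 - 0 : ℕ) : ℚ) := by exact_mod_cast he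
    exact lt_of_lt_of_le (by linarith) he'
  · refine Or.inr ⟨⟨1, by omega⟩, ⟨0, by omega⟩, by simp, hs1, hs0, ?_, ?_, ?_⟩
    · change r - 1 - 1 < v.natDegree
      omega
    · have h : (1 : ℚ) ≤ ((r - 1 - 1 : ℕ) : ℚ) := by
        exact_mod_cast (show 1 ≤ r - 1 - 1 by omega)
      exact lt_of_lt_of_le hL1 h
    · simpa using hL0
end
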